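/- arXiv:1607.05374 — 2 statements merged into one kernel-verified Lean document; each statement's English description precedes it below -/
import Mathlib

section
/- Let n ≥ 3 and let ω be a fast majorant. Suppose φ : 𝕊ⁿ⁻¹ → ℝⁿ satisfies |φ(ξ)−φ(η)| ≤ ω(|ξ−η|) for all ξ, η ∈ 𝕊ⁿ⁻¹, and let Φ = P_h[φ]. Then there exists a constant C' depending only on n and ω such that |Φ(x) − Φ(y)| ≤ C' ω(|x−y|) for all x, y ∈ 𝔹ⁿ. -/
/-!
The kernel `P_h` decays like `δ ^ (n - 1) / |ξ - x| ^ (2n - 2)` with `δ = 1 - |x|`, which on a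
sphere of dimension `n - 1 ≥ 2` is fast enough to control the oscillation of `Φ` at scale `δ` by
`ω(δ)` directly.

Two facts about the kernel carry the proof. First, `∫ P_h(x, ξ) dσ(ξ) = 1` (`integral_Ph`). After
the substitution `b = 2x / (1 + |x|²)` this is the evaluation of
`∫ (1 - ⟪b, ξ⟫) ^ (-(n - 1)) dσ(ξ)`. The same integral with exponent `-n` is the volume of an
ellipsoid in polar coordinates about a focus, hence a linear change of variables; exponent
`-(n - 1)` follows by integrating along the segment from `0` to `b`. Second, if `ζ` is the radial
projection of `x`, then `∫ P_h(x, ξ) |ξ - ζ| dσ(ξ) = O(δ)` (`first_moment`), by comparing the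
kernels at distance `δ` and `2δ` from the sphere.

As `ω(t) ≤ ω(δ) (1 + t / δ)`, these give `∫ P_h(x, ξ) |φ(ξ) - φ(ζ)| dσ(ξ) = O(ω(δ))`
(`weighted_bound`). If `|x - y| > δ / 4`, comparing `Φ(x)` and `Φ(y)` with the values of `φ` at the
radial projections yields the claim. If `|x - y| ≤ δ / 4`, the kernels at `x` and `y` differ by
`O(|x - y| / δ) P_h(x, ξ)` (`Ph_harnack`), so `|Φ(x) - Φ(y)| = O(|x - y| ω(δ) / δ)`, which is
`O(ω(|x - y|))` because `ω(t) / t` is non-increasing.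
-/

open MeasureTheory Metric Set

noncomputable section

/-- The open unit ball setting: Euclidean n-space. -/
abbrev En (n : ℕ) := EuclideanSpace ℝ (Fin n)

/-- Lebesgue volume measure normalized so that the unit ball has measure 1. -/
def nuMeasure (n : ℕ) : Measure (En n) :=
  (volume (ball (0 : En n) 1))⁻¹ • (volume : Measure (En n))

/-- The Möbius invariant measure `dτ(x) = dν(x)/(1-|x|²)ⁿ`. -/
def tauMeasure (n : ℕ) : Measure (En n) :=
  (nuMeasure n).withDensity fun x => ENNReal.ofReal ((1 - ‖x‖ ^ 2) ^ n)⁻¹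

/-- The surface measure on the unit sphere, normalized so that the sphere has measure 1. -/
def sigmaMeasure (n : ℕ) : Measure (sphere (0 : En n) 1) :=
  ((volume : Measure (En n)).toSphere univ)⁻¹ • (volume : Measure (En n)).toSphere

/-- `[a,x]` via the identity `[a,x]² = |x-a|² + (1-|x|²)(1-|a|²)`. -/
def qbracket {n : ℕ} (a x : En n) : ℝ :=
  Real.sqrt (‖x - a‖ ^ 2 + (1 - ‖x‖ ^ 2) * (1 - ‖a‖ ^ 2))

/-- The Möbius transformation `φ_a` of the unit ball with `φ_a(a) = 0`, `φ_a(0) = a`. -/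
def mobius {n : ℕ} (a x : En n) : En n :=
  (qbracket a x ^ 2)⁻¹ • (‖x - a‖ ^ 2 • a - (1 - ‖a‖ ^ 2) • (x - a))

/-- `g(r) = (1/n) ∫_r^1 (1-s²)^{n-2} s^{-(n-1)} ds`. -/
def gfun (n : ℕ) (r : ℝ) : ℝ :=
  (1 / (n : ℝ)) * ∫ s in r..(1 : ℝ), (1 - s ^ 2) ^ (n - 2) / s ^ (n - 1)

/-- The hyperbolic Green function `G_h(x,y) = g(|φ_x(y)|)`. -/
def Gh (n : ℕ) (x y : En n) : ℝ := gfun n ‖mobius x y‖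

/-- The Green integral `G_h[ψ](x) = ∫_{𝔹ⁿ} G_h(x,y) ψ(y) dτ(y)`. -/
def GhInt (n : ℕ) (ψ : En n → En n) (x : En n) : En n :=
  ∫ y in ball (0 : En n) 1, Gh n x y • ψ y ∂(tauMeasure n)

/-- The Poisson–Szegő kernel `P_h(x,ξ) = ((1-|x|²)/|ξ-x|²)^{n-1}`. -/
def Ph (n : ℕ) (x : En n) (ξ : sphere (0 : En n) 1) : ℝ :=
  ((1 - ‖x‖ ^ 2) / ‖(ξ : En n) - x‖ ^ 2) ^ (n - 1)

/-- The Poisson integral `P_h[φ](x) = ∫_{𝕊ⁿ⁻¹} P_h(x,ξ) φ(ξ) dσ(ξ)`. -/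
def PhInt (n : ℕ) (φ : En n → En n) (x : En n) : En n :=
  ∫ ξ, Ph n x ξ • φ (ξ : En n) ∂(sigmaMeasure n)

/-- The `i`-th standard basis vector. -/
def basisE (n : ℕ) (i : Fin n) : En n := EuclideanSpace.single i 1

/-- The Euclidean Laplacian of a vector-valued function. -/
def lap {n : ℕ} (u : En n → En n) (x : En n) : En n :=
  ∑ i : Fin n, fderiv ℝ (fun y => fderiv ℝ u y (basisE n i)) x (basisE n i)

/-- The hyperbolic Laplacian
`Δ_h u(x) = (1-|x|²)² Δu(x) + 2(n-2)(1-|x|²) Σᵢ xᵢ ∂u/∂xᵢ(x)`. -/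
def hypLap (n : ℕ) (u : En n → En n) (x : En n) : En n :=
  (1 - ‖x‖ ^ 2) ^ 2 • lap u x
    + (2 * ((n : ℝ) - 2) * (1 - ‖x‖ ^ 2)) • ∑ i : Fin n, x i • fderiv ℝ u x (basisE n i)

/-- Pochhammer symbol `(a)_k`. -/
def poch (a : ℝ) (k : ℕ) : ℝ := (ascPochhammer ℝ k).eval a

/-- Gauss hypergeometric series `F(a,b;c;s)`. -/
def hyperF (a b c s : ℝ) : ℝ :=
  ∑' k : ℕ, poch a k * poch b k / ((k.factorial : ℝ) * poch c k) * s ^ k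

/-- A majorant: continuous, increasing, `ω(0)=0`, with `ω(t)/t` non-increasing. -/
def IsMajorant (ω : ℝ → ℝ) : Prop :=
  ContinuousOn ω (Ici 0) ∧ MonotoneOn ω (Ici 0) ∧ ω 0 = 0 ∧
    (∀ x ∈ Ici (0:ℝ), 0 ≤ ω x) ∧
    ∀ s t : ℝ, 0 < s → s ≤ t → ω t / t ≤ ω s / s

/-- A fast majorant: `∫₀^ρ ω(t)/t dt ≤ C ω(ρ)` for small `ρ`. -/
def IsFastMajorant (ω : ℝ → ℝ) : Prop :=
  IsMajorant ω ∧ ∃ ρ₀ > (0:ℝ), ∃ C : ℝ,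
    ∀ ρ : ℝ, 0 < ρ → ρ < ρ₀ → (∫ t in (0:ℝ)..ρ, ω t / t) ≤ C * ω ρ

end

open scoped RealInnerProductSpace

/-! ### Normalization of the Poisson–Szegő kernel -/

/-- The set `‖v‖ < 1 + ⟪b, v⟫` is an ellipsoid with a focus at the origin, the affine image of a
ball of radius `w⁻¹`, where `w = √(1 - ‖b‖²)`. -/
lemma volume_ellipsoid {n : ℕ} (b : En n) {w : ℝ} (hw : 0 < w) (hb : ‖b‖ ^ 2 = 1 - w ^ 2) :
    volume {v : En n | ‖v‖ - ⟪b, v⟫ < 1} =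
      ENNReal.ofReal (w⁻¹ ^ (n + 1)) * volume (ball (0 : En n) 1) := by
  set κ : ℝ := (1 + w)⁻¹ with hκ
  have h1w : (1 + w) ≠ 0 := by positivity
  have hκw : κ * (1 + w) = 1 := inv_mul_cancel₀ h1w
  set f : Module.Dual ℝ (En n) := (innerSL ℝ b : En n →L[ℝ] ℝ).toLinearMap with hf
  have hfv : ∀ v, f v = ⟪b, v⟫ := fun v => rfl
  set L : En n →ₗ[ℝ] En n := LinearMap.transvection f (-κ • b) with hL
  have hLv : ∀ v, L v = v - (κ * ⟪b, v⟫) • b := by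
    intro v
    rw [hL, LinearMap.transvection.apply, hfv, smul_smul, sub_eq_add_neg, ← neg_smul]
    ring_nf
  have hdet : LinearMap.det L = w := by
    rw [hL, LinearMap.transvection.det, hfv, inner_smul_right, real_inner_self_eq_norm_sq, hb]
    linear_combination (w - 1) * hκw
  have hnormL : ∀ v, ‖L v‖ ^ 2 = ‖v‖ ^ 2 - ⟪b, v⟫ ^ 2 := by
    intro v
    rw [hLv, norm_sub_sq_real, norm_smul, inner_smul_right, real_inner_comm b v, mul_pow, hb,
      Real.norm_eq_abs, sq_abs]
    linear_combination (-(1 + κ * (1 + w)) * ⟪b, v⟫ ^ 2 + 2 * κ * ⟪b, v⟫ ^ 2 ) * hκw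
  have hbw : ‖b‖ < 1 := by nlinarith [norm_nonneg b]
  have hset : {v : En n | ‖v‖ - ⟪b, v⟫ < 1} = L ⁻¹' ball (L ((w ^ 2)⁻¹ • b)) w⁻¹ := by
    ext v
    have key : ‖L (v - (w ^ 2)⁻¹ • b)‖ ^ 2 - (w⁻¹) ^ 2 = ‖v‖ ^ 2 - (1 + ⟪b, v⟫) ^ 2 := by
      rw [hnormL, norm_sub_sq_real, norm_smul, inner_smul_right, inner_sub_right, inner_smul_right,
        real_inner_comm b v, real_inner_self_eq_norm_sq, mul_pow, hb,
        Real.norm_eq_abs, sq_abs]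
      field_simp
      ring
    rw [mem_ofPred_eq, mem_preimage, mem_ball, dist_eq_norm, ← map_sub]
    have hcs : |⟪b, v⟫| ≤ ‖b‖ * ‖v‖ := abs_real_inner_le_norm b v
    have hle := abs_le.1 hcs
    have hbv : ‖b‖ * ‖v‖ ≤ ‖v‖ := mul_le_of_le_one_left (norm_nonneg v) hbw.le
    -- Squaring `‖v‖ < 1 + ⟪b, v⟫` loses nothing: if `1 + ⟪b, v⟫ < 0` then
    -- `|1 + ⟪b, v⟫| ≤ ‖b‖ * ‖v‖ - 1 < ‖v‖`.
    constructor
    · intro h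
      refine lt_of_pow_lt_pow_left₀ 2 (by positivity) ?_
      nlinarith [norm_nonneg v]
    · intro h
      have h2 : ‖L (v - (w ^ 2)⁻¹ • b)‖ ^ 2 < (w⁻¹) ^ 2 := by gcongr
      have h3 : ‖v‖ ^ 2 < (1 + ⟪b, v⟫) ^ 2 := by linarith
      have h4 := abs_lt_of_sq_lt_sq h3
      have h5 := sq_lt_sq.1 h3
      rw [abs_of_nonneg (norm_nonneg v)] at h5
      rcases le_or_gt 0 (1 + ⟪b, v⟫) with h6 | h6
      · rw [abs_of_nonneg h6] at h5; linarith
      · rw [abs_of_neg h6] at h5; linarith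
  have hdet0 : LinearMap.det L ≠ 0 := by rw [hdet]; exact hw.ne'
  rw [hset, Measure.addHaar_preimage_linearMap _ hdet0, hdet,
    Measure.addHaar_ball_of_pos _ _ (inv_pos.2 hw), ← mul_assoc, ← ENNReal.ofReal_mul (abs_nonneg _),
    abs_of_pos (inv_pos.2 hw), finrank_euclideanSpace_fin, ← pow_succ']

/-- Polar coordinates: the ellipsoid is star-shaped about the origin with radial function
`ξ ↦ (1 - ⟪b, ξ⟫)⁻¹`. -/
lemma volume_polar {n : ℕ} (hn : 1 ≤ n) (b : En n) (hb : ‖b‖ < 1) :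
    volume {v : En n | ‖v‖ - ⟪b, v⟫ < 1} =
      ∫⁻ ξ : sphere (0 : En n) 1, ENNReal.ofReal (((1 - ⟪b, (ξ : En n)⟫)⁻¹) ^ n / n)
        ∂(volume : Measure (En n)).toSphere := by
  have : Nonempty (Fin n) := ⟨⟨0, hn⟩⟩
  set E : Set (En n) := {v : En n | ‖v‖ - ⟪b, v⟫ < 1} with hE
  have hEm : MeasurableSet E := by
    apply IsOpen.measurableSet
    exact isOpen_lt (by fun_prop) continuous_const
  have hpos : ∀ ξ : sphere (0 : En n) 1, 0 < 1 - ⟪b, (ξ : En n)⟫ := by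
    intro ξ
    have h := real_inner_le_norm b (ξ : En n)
    rw [norm_eq_of_mem_sphere ξ] at h
    linarith
  have h0 : volume E = volume.comap ((↑) : ({0}ᶜ : Set (En n)) → En n) ((↑) ⁻¹' E) := by
    rw [comap_subtype_coe_apply (measurableSet_singleton _).compl, Subtype.image_preimage_coe,
      inter_comm, ← sdiff_eq, measure_sdiff_null (measure_singleton _)]
  have hmp := (volume : Measure (En n)).measurePreserving_homeomorphUnitSphereProd
  set F : Set (sphere (0 : En n) 1 × Ioi (0 : ℝ)) :=
    {p | (p.2 : ℝ) * (1 - ⟪b, (p.1 : En n)⟫) < 1} with hF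
  have hFm : MeasurableSet F := by
    apply IsOpen.measurableSet
    exact isOpen_lt (by fun_prop) continuous_const
  have hpre : ((↑) ⁻¹' E : Set ({0}ᶜ : Set (En n))) = homeomorphUnitSphereProd (En n) ⁻¹' F := by
    ext v
    have hv : (v : En n) ≠ 0 := v.2
    have hv' : ‖(v : En n)‖ ≠ 0 := norm_ne_zero_iff.2 hv
    simp only [hE, hF, mem_preimage, mem_ofPred_eq, homeomorphUnitSphereProd_apply_fst_coe,
      homeomorphUnitSphereProd_apply_snd_coe, inner_smul_right]
    rw [mul_sub, mul_one, ← mul_assoc, mul_inv_cancel₀ hv', one_mul]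
  rw [h0, hpre, hmp.measure_preimage hFm.nullMeasurableSet, Measure.prod_apply hFm]
  refine lintegral_congr fun ξ => ?_
  have : Prod.mk ξ ⁻¹' F = Iio (⟨(1 - ⟪b, (ξ : En n)⟫)⁻¹, inv_pos.2 (hpos ξ)⟩ : Ioi (0 : ℝ)) := by
    ext r
    simp only [hF, mem_preimage, mem_ofPred_eq, mem_Iio, ← Subtype.coe_lt_coe]
    rw [← lt_div_iff₀ (hpos ξ), one_div]
  rw [this, Measure.volumeIoiPow_apply_Iio, finrank_euclideanSpace_fin, Nat.sub_add_cancel hn,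
    Nat.cast_pred hn, sub_add_cancel]

lemma sigma_prob {n : ℕ} (hn : 1 ≤ n) : IsProbabilityMeasure (sigmaMeasure n) := by
  have : Nonempty (Fin n) := ⟨⟨0, hn⟩⟩
  constructor
  rw [sigmaMeasure, Measure.smul_apply, smul_eq_mul]
  refine ENNReal.inv_mul_cancel ?_ (measure_ne_top _ _)
  exact Measure.measure_univ_ne_zero.2 (Measure.toSphere_ne_zero _)

lemma one_sub_inner_pos {n : ℕ} {b : En n} (hb : ‖b‖ < 1) (ξ : sphere (0 : En n) 1) :
    0 < 1 - ⟪b, (ξ : En n)⟫ := by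
  have h := real_inner_le_norm b (ξ : En n)
  rw [norm_eq_of_mem_sphere ξ] at h
  linarith

lemma integral_pow_n {n : ℕ} (hn : 1 ≤ n) (b : En n) {w : ℝ} (hw : 0 < w)
    (hb : ‖b‖ ^ 2 = 1 - w ^ 2) :
    ∫ ξ, ((1 - ⟪b, (ξ : En n)⟫)⁻¹) ^ n ∂(sigmaMeasure n) = w⁻¹ ^ (n + 1) := by
  have : Nonempty (Fin n) := ⟨⟨0, hn⟩⟩
  have hbw : ‖b‖ < 1 := by nlinarith [norm_nonneg b]
  have hn0 : (0 : ℝ) < n := by exact_mod_cast hn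
  have h := (volume_polar hn b hbw).symm.trans (volume_ellipsoid b hw hb)
  have hcont : Continuous fun ξ : sphere (0 : En n) 1 => ((1 - ⟪b, (ξ : En n)⟫)⁻¹) ^ n := by
    refine Continuous.pow (Continuous.inv₀ (by fun_prop) fun ξ => (one_sub_inner_pos hbw ξ).ne') _
  have hnonneg : ∀ ξ : sphere (0 : En n) 1, 0 ≤ ((1 - ⟪b, (ξ : En n)⟫)⁻¹) ^ n := fun ξ =>
    pow_nonneg (inv_nonneg.2 (one_sub_inner_pos hbw ξ).le) _
  rw [integral_eq_lintegral_of_nonneg_ae (ae_of_all _ hnonneg) hcont.aestronglyMeasurable,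
    sigmaMeasure, lintegral_smul_measure, Measure.toSphere_apply_univ, finrank_euclideanSpace_fin]
  have h2 : ∫⁻ ξ : sphere (0 : En n) 1, ENNReal.ofReal (((1 - ⟪b, (ξ : En n)⟫)⁻¹) ^ n)
        ∂(volume : Measure (En n)).toSphere =
        n * (ENNReal.ofReal (w⁻¹ ^ (n + 1)) * volume (ball (0 : En n) 1)) := by
    rw [← h, ← lintegral_const_mul _ (by
      exact (hcont.div_const _).measurable.ennreal_ofReal)]
    refine lintegral_congr fun ξ => ?_
    rw [← ENNReal.ofReal_natCast, ← ENNReal.ofReal_mul hn0.le]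
    congr 1
    field_simp
  have hV0 : volume (ball (0 : En n) 1) ≠ 0 := (measure_ball_pos _ _ one_pos).ne'
  have hVt : volume (ball (0 : En n) 1) ≠ ⊤ := measure_ball_lt_top.ne
  rw [h2, smul_eq_mul, mul_left_comm (n : ENNReal), mul_left_comm, ENNReal.inv_mul_cancel, mul_one,
    ENNReal.toReal_ofReal (by positivity)]
  · exact mul_ne_zero (by exact_mod_cast (by omega)) hV0
  · exact ENNReal.mul_ne_top (ENNReal.natCast_ne_top _) hVt

/-- This follows from `integral_pow_n`, applied to `s • b`, by integrating over `s ∈ [0, 1]`: both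
`(s / (1 - s⟪b, ξ⟫)) ^ (k + 1)` and `(s / √(1 - s²‖b‖²)) ^ (k + 1)` have the matching
`s`-derivative. -/
lemma integral_pow_pred {k : ℕ} (b : En (k + 2)) {w : ℝ} (hw : 0 < w)
    (hb : ‖b‖ ^ 2 = 1 - w ^ 2) :
    ∫ ξ, ((1 - ⟪b, (ξ : En (k + 2))⟫)⁻¹) ^ (k + 1) ∂(sigmaMeasure (k + 2)) = w⁻¹ ^ (k + 1) := by
  have := sigma_prob (n := k + 2) (by omega)
  have hbw : ‖b‖ < 1 := by nlinarith [norm_nonneg b]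
  set G : ℝ → sphere (0 : En (k + 2)) 1 → ℝ := fun s ξ =>
    (k + 1) * s ^ k * ((1 - ⟪s • b, (ξ : En (k + 2))⟫)⁻¹) ^ (k + 2) with hG
  have hsb : ∀ s ∈ Icc (0 : ℝ) 1, ‖s • b‖ < 1 := by
    intro s hs
    rw [norm_smul, Real.norm_of_nonneg hs.1]
    nlinarith [hs.2, hs.1, norm_nonneg b]
  have hpos : ∀ s ∈ Icc (0 : ℝ) 1, ∀ ξ : sphere (0 : En (k + 2)) 1,
      0 < 1 - ⟪s • b, (ξ : En (k + 2))⟫ := fun s hs ξ => one_sub_inner_pos (hsb s hs) ξ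
  have hws : ∀ s ∈ Icc (0 : ℝ) 1, 0 < 1 - s ^ 2 * ‖b‖ ^ 2 := by
    intro s hs
    have h1 := hsb s hs
    rw [norm_smul, Real.norm_of_nonneg hs.1] at h1
    have h2 : 0 ≤ s * ‖b‖ := mul_nonneg hs.1 (norm_nonneg b)
    nlinarith
  have hI : ∀ s ∈ Icc (0 : ℝ) 1, ∫ ξ, G s ξ ∂(sigmaMeasure (k + 2)) =
      (k + 1) * s ^ k * (√(1 - s ^ 2 * ‖b‖ ^ 2))⁻¹ ^ (k + 3) := by
    intro s hs
    rw [hG, integral_const_mul, integral_pow_n (by omega) (s • b) (Real.sqrt_pos.2 (hws s hs))]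
    rw [Real.sq_sqrt (hws s hs).le, norm_smul, Real.norm_of_nonneg hs.1]
    ring
  have hJ : ∀ ξ : sphere (0 : En (k + 2)) 1, ∫ s in (0 : ℝ)..1, G s ξ =
      ((1 - ⟪b, (ξ : En (k + 2))⟫)⁻¹) ^ (k + 1) := by
    intro ξ
    have hd : ∀ s ∈ uIcc (0 : ℝ) 1, HasDerivAt
        (fun s : ℝ => (s * (1 - s * ⟪b, (ξ : En (k + 2))⟫)⁻¹) ^ (k + 1)) (G s ξ) s := by
      intro s hs
      rw [uIcc_of_le zero_le_one] at hs
      have hp := hpos s hs ξ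
      rw [real_inner_smul_left] at hp
      have h1 : HasDerivAt (fun s : ℝ => 1 - s * ⟪b, (ξ : En (k + 2))⟫)
          (-(1 * ⟪b, (ξ : En (k + 2))⟫)) s :=
        ((hasDerivAt_id s).mul_const _).const_sub 1
      have h2 := ((hasDerivAt_id s).mul (h1.inv hp.ne')).pow (k + 1)
      refine HasDerivAt.congr_deriv (show HasDerivAt _ _ s from h2) ?_
      simp only [hG, real_inner_smul_left, id, Nat.add_sub_cancel, Pi.inv_apply, Pi.mul_apply]
      have h3 : ∀ d : ℝ, 0 < d → d = 1 - s * ⟪b, (ξ : En (k + 2))⟫ →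
          1 * d⁻¹ + s * (- -(1 * ⟪b, (ξ : En (k + 2))⟫) / d ^ 2) = d⁻¹ ^ 2 := by
        intro d hd hd'
        field_simp
        linarith
      rw [h3 _ hp rfl]
      push_cast
      ring
    have hc : ContinuousOn (fun s => G s ξ) (uIcc (0 : ℝ) 1) := by
      rw [uIcc_of_le zero_le_one]
      refine ContinuousOn.mul (by fun_prop) (ContinuousOn.pow (ContinuousOn.inv₀ ?_ ?_) _)
      · simp only [real_inner_smul_left]; fun_prop
      · exact fun s hs => (hpos s hs ξ).ne'
    rw [intervalIntegral.integral_eq_sub_of_hasDerivAt hd hc.intervalIntegrable]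
    simp
  have hInt : Integrable (Function.uncurry G)
      ((volume.restrict (uIoc (0 : ℝ) 1)).prod (sigmaMeasure (k + 2))) := by
    have hc : ContinuousOn (Function.uncurry G) (Icc (0 : ℝ) 1 ×ˢ univ) := by
      refine ContinuousOn.mul (by fun_prop) (ContinuousOn.pow (ContinuousOn.inv₀ ?_ ?_) _)
      · fun_prop
      · exact fun p hp => (hpos p.1 hp.1 p.2).ne'
    have h1 : IntegrableOn (Function.uncurry G) (Icc (0 : ℝ) 1 ×ˢ univ)
        (volume.prod (sigmaMeasure (k + 2))) :=
      hc.integrableOn_compact (isCompact_Icc.prod isCompact_univ)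
    have h2 := h1.mono_set (prod_mono (s₁ := uIoc (0 : ℝ) 1) (by
      rw [uIoc_of_le zero_le_one]; exact Ioc_subset_Icc_self) (subset_refl univ))
    rwa [IntegrableOn, ← Measure.prod_restrict, Measure.restrict_univ] at h2
  have hswap := intervalIntegral_integral_swap hInt
  simp_rw [hJ] at hswap
  rw [← hswap]
  have hcongr : ∫ s in (0 : ℝ)..1, ∫ ξ, G s ξ ∂(sigmaMeasure (k + 2)) =
      ∫ s in (0 : ℝ)..1, (k + 1) * s ^ k * (√(1 - s ^ 2 * ‖b‖ ^ 2))⁻¹ ^ (k + 3) := by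
    refine intervalIntegral.integral_congr fun s hs => hI s ?_
    rwa [uIcc_of_le zero_le_one] at hs
  rw [hcongr]
  have hd : ∀ s ∈ uIcc (0 : ℝ) 1, HasDerivAt
      (fun s : ℝ => (s * (√(1 - s ^ 2 * ‖b‖ ^ 2))⁻¹) ^ (k + 1))
      ((k + 1) * s ^ k * (√(1 - s ^ 2 * ‖b‖ ^ 2))⁻¹ ^ (k + 3)) s := by
    intro s hs
    rw [uIcc_of_le zero_le_one] at hs
    have hp := hws s hs
    have hq := Real.sqrt_pos.2 hp
    have h1 : HasDerivAt (fun s : ℝ => 1 - s ^ 2 * ‖b‖ ^ 2)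
        (-((2 : ℕ) * s ^ (2 - 1) * ‖b‖ ^ 2)) s :=
      ((hasDerivAt_pow 2 s).mul_const _).const_sub 1
    have h2 := ((hasDerivAt_id s).mul ((h1.sqrt hp.ne').inv hq.ne')).pow (k + 1)
    refine HasDerivAt.congr_deriv (show HasDerivAt _ _ s from h2) ?_
    simp only [id, Nat.add_sub_cancel, Pi.inv_apply, Pi.mul_apply]
    have hsq := Real.sq_sqrt hp.le
    set q := √(1 - s ^ 2 * ‖b‖ ^ 2)
    have : ‖b‖ ^ 2 * s ^ 2 = 1 - q ^ 2 := by linarith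
    have h3 : 1 * q⁻¹ + s * (-(-((2 : ℕ) * s ^ (2 - 1) * ‖b‖ ^ 2) / (2 * q)) / q ^ 2) =
        q⁻¹ ^ 3 := by
      field_simp
      push_cast
      linear_combination 2 * this
    rw [h3]
    push_cast
    ring
  have hc : ContinuousOn (fun s : ℝ => (k + 1) * s ^ k * (√(1 - s ^ 2 * ‖b‖ ^ 2))⁻¹ ^ (k + 3))
      (uIcc (0 : ℝ) 1) := by
    rw [uIcc_of_le zero_le_one]
    refine ContinuousOn.mul (by fun_prop) (ContinuousOn.pow (ContinuousOn.inv₀ (by fun_prop) ?_) _)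
    exact fun s hs => (Real.sqrt_pos.2 (hws s hs)).ne'
  rw [intervalIntegral.integral_eq_sub_of_hasDerivAt hd hc.intervalIntegrable]
  have : 1 - 1 ^ 2 * ‖b‖ ^ 2 = w ^ 2 := by rw [hb]; ring
  rw [this, Real.sqrt_sq hw.le]
  simp

lemma norm_sub_pos {n : ℕ} (x : En n) (ξ : sphere (0 : En n) 1) :
    1 - ‖x‖ ≤ ‖(ξ : En n) - x‖ := by
  have h := norm_sub_norm_le (ξ : En n) x
  rwa [norm_eq_of_mem_sphere ξ] at h

lemma continuous_Ph {n : ℕ} {x : En n} (hx : ‖x‖ < 1) : Continuous (Ph n x) := by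
  refine Continuous.pow (Continuous.div continuous_const (by fun_prop) fun ξ => ?_) _
  have := norm_sub_pos x ξ
  have : 0 < ‖(ξ : En n) - x‖ := by linarith
  positivity

lemma Ph_nonneg {n : ℕ} {x : En n} (hx : ‖x‖ < 1) (ξ : sphere (0 : En n) 1) : 0 ≤ Ph n x ξ := by
  refine pow_nonneg (div_nonneg ?_ (sq_nonneg _)) _
  nlinarith [norm_nonneg x]

/-- The kernel is `(w / (1 - ⟪b, ξ⟫)) ^ (n - 1)` with `b = 2x / (1 + ‖x‖²)` and
`w = √(1 - ‖b‖²) = (1 - ‖x‖²) / (1 + ‖x‖²)`. -/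
lemma integral_Ph {n : ℕ} (hn : 2 ≤ n) {x : En n} (hx : ‖x‖ < 1) :
    ∫ ξ, Ph n x ξ ∂(sigmaMeasure n) = 1 := by
  obtain ⟨k, rfl⟩ : ∃ k, n = k + 2 := ⟨n - 2, by omega⟩
  set S := 1 + ‖x‖ ^ 2 with hS
  have hS0 : 0 < S := by positivity
  have hx2 : ‖x‖ ^ 2 < 1 := by nlinarith [norm_nonneg x]
  set b : En (k + 2) := (2 / S) • x with hb
  set w : ℝ := (1 - ‖x‖ ^ 2) / S with hw
  have hw0 : 0 < w := div_pos (by linarith) hS0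
  have hbw : ‖b‖ ^ 2 = 1 - w ^ 2 := by
    rw [hb, hw, norm_smul, mul_pow, Real.norm_eq_abs, sq_abs]
    field_simp
    rw [hS]; ring
  have hbn : ‖b‖ < 1 := by nlinarith [norm_nonneg b]
  have hP : ∀ ξ : sphere (0 : En (k + 2)) 1, Ph (k + 2) x ξ =
      w ^ (k + 1) * ((1 - ⟪b, (ξ : En (k + 2))⟫)⁻¹) ^ (k + 1) := by
    intro ξ
    have h1 : ‖(ξ : En (k + 2)) - x‖ ^ 2 = S * (1 - ⟪b, (ξ : En (k + 2))⟫) := by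
      rw [norm_sub_sq_real, norm_eq_of_mem_sphere ξ, hb, real_inner_smul_left,
        real_inner_comm x (ξ : En (k + 2))]
      field_simp
      rw [hS]; ring
    have h2 := one_sub_inner_pos hbn ξ
    rw [Ph, h1, ← mul_pow, hw]
    congr 1
    field_simp
  simp_rw [hP]
  rw [integral_const_mul, integral_pow_pred b hw0 hbw, ← mul_pow, mul_inv_cancel₀ hw0.ne', one_pow]

/-! ### The first moment of the kernel -/

/-- Comparison of the kernels at distance `δ` and `2δ` from the boundary. At distance at least `4δ`
from `ζ` the base of the power gains a factor `2/3`; since `n - 1 ≥ 2` the kernel gains `4/9`,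
which beats the factor `2` lost in doubling `δ`. Nearer to `ζ` the first term on the right
suffices. -/
lemma Ph_doubling {n : ℕ} (hn : 3 ≤ n) {ζ : En n} (hζ : ‖ζ‖ = 1) {δ : ℝ} (hδ : 0 < δ)
    (hδ' : δ ≤ 1 / 2) (ξ : sphere (0 : En n) 1) :
    Ph n ((1 - δ) • ζ) ξ * ‖(ξ : En n) - ζ‖ ≤
      4 * δ * Ph n ((1 - δ) • ζ) ξ + 4 / 9 * (Ph n ((1 - 2 * δ) • ζ) ξ * ‖(ξ : En n) - ζ‖) := by
  have hnorm : ∀ s : ℝ, 0 ≤ 1 - s → ‖(1 - s) • ζ‖ = 1 - s := by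
    intro s hs
    rw [norm_smul, Real.norm_of_nonneg hs, hζ, mul_one]
  set u := ‖(ξ : En n) - ζ‖ with hu
  have hu0 : 0 ≤ u := norm_nonneg _
  have hdist : ∀ s : ℝ, ‖(ξ : En n) - (1 - s) • ζ‖ ^ 2 = s ^ 2 + (1 - s) * u ^ 2 := by
    intro s
    rw [hu, norm_sub_sq_real, norm_sub_sq_real, norm_smul, inner_smul_right, mul_pow, hζ,
      norm_eq_of_mem_sphere ξ, Real.norm_eq_abs, sq_abs]
    ring
  have hP1 : 0 ≤ Ph n ((1 - δ) • ζ) ξ := Ph_nonneg (by rw [hnorm δ (by linarith)]; linarith) ξ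
  have hP2 : 0 ≤ Ph n ((1 - 2 * δ) • ζ) ξ :=
    Ph_nonneg (by rw [hnorm (2 * δ) (by linarith)]; linarith) ξ
  rcases le_total u (4 * δ) with h | h
  · have := mul_le_mul_of_nonneg_left h hP1
    have := mul_nonneg hP2 hu0
    linarith
  · have hbase : (1 - ‖(1 - δ) • ζ‖ ^ 2) / ‖(ξ : En n) - (1 - δ) • ζ‖ ^ 2 ≤
        2 / 3 * ((1 - ‖(1 - 2 * δ) • ζ‖ ^ 2) / ‖(ξ : En n) - (1 - 2 * δ) • ζ‖ ^ 2) := by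
      rw [hdist, hdist, hnorm δ (by linarith), hnorm (2 * δ) (by linarith), ← mul_div_assoc]
      have h1 : 0 < δ ^ 2 + (1 - δ) * u ^ 2 := by
        have : 0 ≤ (1 - δ) * u ^ 2 := mul_nonneg (by linarith) (sq_nonneg u)
        positivity
      have h2 : 0 < (2 * δ) ^ 2 + (1 - 2 * δ) * u ^ 2 := by
        have : 0 ≤ (1 - 2 * δ) * u ^ 2 := mul_nonneg (by linarith) (sq_nonneg u)
        positivity
      rw [div_le_div_iff₀ h1 h2]
      have hu2 : 16 * δ ^ 2 ≤ u ^ 2 := by nlinarith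
      have h3 : 0 ≤ u ^ 2 * (2 - δ + 2 * δ ^ 2) - δ ^ 2 * (16 - 4 * δ) := by
        nlinarith [mul_nonneg (sub_nonneg.2 hu2) (show 0 ≤ 2 - δ + 2 * δ ^ 2 by nlinarith),
          mul_nonneg (sq_nonneg δ) (show 0 ≤ 16 * (2 - δ + 2 * δ ^ 2) - (16 - 4 * δ) by nlinarith)]
      nlinarith [mul_nonneg hδ.le h3]
    have hb0 : 0 ≤ (1 - ‖(1 - δ) • ζ‖ ^ 2) / ‖(ξ : En n) - (1 - δ) • ζ‖ ^ 2 := by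
      rw [hnorm δ (by linarith)]
      exact div_nonneg (by nlinarith) (sq_nonneg _)
    have h4 : Ph n ((1 - δ) • ζ) ξ ≤ 4 / 9 * Ph n ((1 - 2 * δ) • ζ) ξ := by
      calc Ph n ((1 - δ) • ζ) ξ ≤ (2 / 3 * ((1 - ‖(1 - 2 * δ) • ζ‖ ^ 2) /
            ‖(ξ : En n) - (1 - 2 * δ) • ζ‖ ^ 2)) ^ (n - 1) := pow_le_pow_left₀ hb0 hbase _
        _ = (2 / 3) ^ (n - 1) * Ph n ((1 - 2 * δ) • ζ) ξ := mul_pow _ _ _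
        _ ≤ 4 / 9 * Ph n ((1 - 2 * δ) • ζ) ξ := by
          refine mul_le_mul_of_nonneg_right ?_ hP2
          calc (2 / 3 : ℝ) ^ (n - 1) ≤ (2 / 3) ^ 2 :=
                pow_le_pow_of_le_one (by norm_num) (by norm_num) (by omega)
            _ = 4 / 9 := by norm_num
    have := mul_le_mul_of_nonneg_right h4 hu0
    have := mul_nonneg hδ.le hP1
    linarith

lemma integrable_of_cont {n : ℕ} {F : Type*} [NormedAddCommGroup F] (hn : 1 ≤ n)
    {f : sphere (0 : En n) 1 → F} (hf : Continuous f) : Integrable f (sigmaMeasure n) := by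
  have := sigma_prob hn
  exact hf.integrable_of_hasCompactSupport (HasCompactSupport.of_compactSpace f)

/-- The mean distance of `ξ` to `ζ` under the kernel at `(1 - δ) • ζ` is `O(δ)`. This fails for
`n = 2`, where a factor `log (1 / δ)` appears. -/
lemma first_moment {n : ℕ} (hn : 3 ≤ n) {ζ : En n} (hζ : ‖ζ‖ = 1) {δ : ℝ} (hδ : 0 < δ)
    (hδ' : δ ≤ 1) :
    ∫ ξ, Ph n ((1 - δ) • ζ) ξ * ‖(ξ : En n) - ζ‖ ∂(sigmaMeasure n) ≤ 36 * δ := by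
  have hlt : ∀ s : ℝ, 0 < s → s ≤ 1 → ‖(1 - s) • ζ‖ < 1 := by
    intro s hs hs'
    rw [norm_smul, Real.norm_of_nonneg (by linarith), hζ]
    linarith
  have hInt : ∀ s : ℝ, 0 < s → s ≤ 1 → Integrable (Ph n ((1 - s) • ζ)) (sigmaMeasure n) :=
    fun s hs hs' => integrable_of_cont (by omega) (continuous_Ph (hlt s hs hs'))
  have hInt' : ∀ s : ℝ, 0 < s → s ≤ 1 →
      Integrable (fun ξ => Ph n ((1 - s) • ζ) ξ * ‖(ξ : En n) - ζ‖) (sigmaMeasure n) :=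
    fun s hs hs' => integrable_of_cont (by omega) ((continuous_Ph (hlt s hs hs')).mul (by fun_prop))
  -- Induction on the dyadic scale of `δ`: the bound `36 * (2 * δ)` at scale `2 * δ` gives
  -- `4 * δ + 4 / 9 * 72 * δ = 36 * δ` at scale `δ`.
  have main : ∀ j : ℕ, ∀ δ : ℝ, 0 < δ → δ ≤ 1 → 1 ≤ δ * 2 ^ (j + 1) →
      ∫ ξ, Ph n ((1 - δ) • ζ) ξ * ‖(ξ : En n) - ζ‖ ∂(sigmaMeasure n) ≤ 36 * δ := by
    intro j
    induction j with
    | zero =>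
      intro δ hδ hδ' h
      have h1 : ∫ ξ, Ph n ((1 - δ) • ζ) ξ * ‖(ξ : En n) - ζ‖ ∂(sigmaMeasure n) ≤
          ∫ ξ, Ph n ((1 - δ) • ζ) ξ * 2 ∂(sigmaMeasure n) := by
        refine integral_mono (hInt' δ hδ hδ') ((hInt δ hδ hδ').mul_const _) fun ξ => ?_
        refine mul_le_mul_of_nonneg_left ?_ (Ph_nonneg (hlt δ hδ hδ') ξ)
        calc ‖(ξ : En n) - ζ‖ ≤ ‖(ξ : En n)‖ + ‖ζ‖ := norm_sub_le _ _
          _ = 2 := by rw [norm_eq_of_mem_sphere ξ, hζ]; norm_num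
      rw [integral_mul_const, integral_Ph (by omega) (hlt δ hδ hδ')] at h1
      norm_num at h
      linarith
    | succ j ih =>
      intro δ hδ hδ' h
      rcases le_or_gt δ (1 / 2) with hd | hd
      · have h2 := ih (2 * δ) (by linarith) (by linarith) (by rw [pow_succ] at h; linarith)
        have h1 := integral_mono (hInt' δ hδ hδ') (((hInt δ hδ hδ').const_mul (4 * δ)).add
          ((hInt' (2 * δ) (by linarith) (by linarith)).const_mul (4 / 9)))
          (fun ξ => Ph_doubling hn hζ hδ hd ξ)
        simp only [Pi.add_apply] at h1
        rw [integral_add ((hInt δ hδ hδ').const_mul (4 * δ))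
          ((hInt' (2 * δ) (by linarith) (by linarith)).const_mul (4 / 9)), integral_const_mul,
          integral_const_mul, integral_Ph (by omega) (hlt δ hδ hδ')] at h1
        linarith
      · refine ih δ hδ hδ' ?_
        have : (1 : ℝ) ≤ 2 ^ j := one_le_pow₀ (by norm_num)
        rw [pow_succ]
        nlinarith
  obtain ⟨j, hj⟩ := pow_unbounded_of_one_lt (1 / δ) (by norm_num : (1 : ℝ) < 2)
  refine main j δ hδ hδ' ?_
  rw [div_lt_iff₀ hδ] at hj
  have : (0 : ℝ) < 2 ^ j := by positivity
  rw [pow_succ]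
  nlinarith

/-! ### Oscillation estimates -/

lemma majorant_scale {ω : ℝ → ℝ} (hω : IsMajorant ω) {c h : ℝ} (hc : 1 ≤ c) (hh : 0 < h) :
    ω (c * h) ≤ c * ω h := by
  have h1 := hω.2.2.2.2 h (c * h) hh (by nlinarith)
  have hch : 0 < c * h := by positivity
  rw [div_le_div_iff₀ hch hh] at h1
  nlinarith

lemma majorant_le {ω : ℝ → ℝ} (hω : IsMajorant ω) {u δ : ℝ} (hu : 0 ≤ u) (hδ : 0 < δ) :
    ω u ≤ ω δ * (1 + u / δ) := by
  have hωδ : 0 ≤ ω δ := hω.2.2.2.1 δ hδ.le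
  have h0 : 0 ≤ u / δ := div_nonneg hu hδ.le
  rcases le_total u δ with h | h
  · have := hω.2.1 hu hδ.le h
    nlinarith
  · have := majorant_scale hω ((one_le_div hδ).2 h) hδ
    rw [div_mul_cancel₀ _ hδ.ne'] at this
    nlinarith

/-- Any kernel dominated by a multiple `A` of the Poisson–Szegő kernel at `(1 - δ) • ζ` integrates
`φ - φ ζ` to `O(A * ω δ)`: this combines `majorant_le` with the mass and the first moment. The
vector `(1 - δ) • ζ` is the point at distance `δ` from the sphere whose nearest boundary point is
`ζ`. -/
lemma weighted_bound {n : ℕ} (hn : 3 ≤ n) {ω : ℝ → ℝ} (hω : IsMajorant ω) {φ : En n → En n}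
    (hφ : ∀ ξ ∈ sphere (0 : En n) 1, ∀ η ∈ sphere (0 : En n) 1, ‖φ ξ - φ η‖ ≤ ω ‖ξ - η‖)
    {ζ : En n} (hζ : ‖ζ‖ = 1) {δ : ℝ} (hδ : 0 < δ) (hδ' : δ ≤ 1)
    {K : sphere (0 : En n) 1 → ℝ} {A : ℝ} (hA : 0 ≤ A)
    (hK : ∀ ξ, |K ξ| ≤ A * Ph n ((1 - δ) • ζ) ξ) :
    ‖∫ ξ, K ξ • (φ (ξ : En n) - φ ζ) ∂(sigmaMeasure n)‖ ≤ 37 * A * ω δ := by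
  have hlt : ‖(1 - δ) • ζ‖ < 1 := by
    rw [norm_smul, Real.norm_of_nonneg (by linarith), hζ]
    linarith
  have hωδ : 0 ≤ ω δ := hω.2.2.2.1 δ hδ.le
  have i1 : Integrable (Ph n ((1 - δ) • ζ)) (sigmaMeasure n) :=
    integrable_of_cont (by omega) (continuous_Ph hlt)
  have i2 : Integrable (fun ξ => Ph n ((1 - δ) • ζ) ξ * ‖(ξ : En n) - ζ‖) (sigmaMeasure n) :=
    integrable_of_cont (by omega) ((continuous_Ph hlt).mul (by fun_prop))
  have hb := norm_integral_le_of_norm_le (μ := sigmaMeasure n)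
    (f := fun ξ => K ξ • (φ (ξ : En n) - φ ζ))
    ((i1.const_mul (A * ω δ)).add (i2.const_mul (A * ω δ / δ))) (ae_of_all _ fun ξ => ?_)
  · simp only [Pi.add_apply] at hb
    rw [integral_add (i1.const_mul (A * ω δ)) (i2.const_mul (A * ω δ / δ)), integral_const_mul,
      integral_const_mul, integral_Ph (by omega) hlt] at hb
    have h1 := mul_le_mul_of_nonneg_left (first_moment hn hζ hδ hδ')
      (show 0 ≤ A * ω δ / δ by positivity)
    have h2 : A * ω δ / δ * (36 * δ) = 36 * (A * ω δ) := by field_simp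
    linarith
  · have hP := Ph_nonneg hlt ξ
    have h1 := (hφ ξ ξ.2 ζ (by simpa using hζ)).trans (majorant_le hω (norm_nonneg _) hδ)
    rw [norm_smul, Real.norm_eq_abs, Pi.add_apply]
    calc |K ξ| * ‖φ ξ - φ ζ‖ ≤ (A * Ph n ((1 - δ) • ζ) ξ) * (ω δ * (1 + ‖(ξ : En n) - ζ‖ / δ)) :=
          mul_le_mul (hK ξ) h1 (norm_nonneg _) (mul_nonneg hA hP)
      _ = _ := by field_simp

lemma abs_pow_sub_pow_le_of_close {p q ε : ℝ} (hp : 0 < p) (hq : 0 ≤ q) (hε0 : 0 ≤ ε)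
    (hε : ε ≤ 1 / 4) (hpq : |p - q| ≤ 8 * ε * p) (m : ℕ) :
    |p ^ m - q ^ m| ≤ 8 * (m : ℝ) * 3 ^ (m - 1) * ε * p ^ m := by
  have hq3 : q ≤ 3 * p := by
    have := (abs_le.1 hpq).1
    nlinarith
  have hmax : max |p| |q| ≤ 3 * p := by
    rw [abs_of_pos hp, abs_of_nonneg hq]
    exact max_le (by linarith) hq3
  rcases Nat.eq_zero_or_pos m with rfl | h0
  · simp
  calc |p ^ m - q ^ m|
      ≤ |p - q| * (m : ℝ) * max |p| |q| ^ (m - 1) := abs_pow_sub_pow_le _ _ _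
    _ ≤ (8 * ε * p) * (m : ℝ) * (3 * p) ^ (m - 1) := by gcongr
    _ = 8 * (m : ℝ) * 3 ^ (m - 1) * ε * (p ^ (m - 1) * p) := by
        rw [mul_pow]; ring
    _ = _ := by rw [← pow_succ, Nat.sub_add_cancel h0]

/-- A Harnack-type inequality: the kernel has relative variation `O(‖x - y‖ / (1 - ‖x‖))` at the
scale of the distance to the boundary. -/
lemma Ph_harnack {n : ℕ} {x y : En n} (hx : ‖x‖ < 1) (hy : ‖y‖ < 1)
    (hxy : ‖x - y‖ ≤ (1 - ‖x‖) / 4) (ξ : sphere (0 : En n) 1) :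
    |Ph n x ξ - Ph n y ξ| ≤
      8 * ((n - 1 : ℕ) : ℝ) * 3 ^ (n - 1 - 1) * (‖x - y‖ / (1 - ‖x‖)) * Ph n x ξ := by
  set h := ‖x - y‖ with hh
  set δ := 1 - ‖x‖ with hδ
  have hδ0 : 0 < δ := by linarith
  have hh0 : 0 ≤ h := norm_nonneg _
  set t := ‖(ξ : En n) - x‖ with ht
  set s := ‖(ξ : En n) - y‖ with hs
  have htδ : δ ≤ t := norm_sub_pos x ξ
  have ht0 : 0 < t := by linarith
  have hst : |t - s| ≤ h := by
    have := abs_norm_sub_norm_le ((ξ : En n) - x) ((ξ : En n) - y)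
    rwa [sub_sub_sub_cancel_left, norm_sub_rev y x] at this
  have hnn : |‖x‖ - ‖y‖| ≤ h := abs_norm_sub_norm_le x y
  obtain ⟨hst1, hst2⟩ := abs_le.1 hst
  obtain ⟨hnn1, hnn2⟩ := abs_le.1 hnn
  have hs34 : 3 / 4 * t ≤ s := by linarith
  have hs54 : s ≤ 5 / 4 * t := by linarith
  have hs0 : 0 < s := by linarith
  set p := (1 - ‖x‖ ^ 2) / t ^ 2 with hp
  set q := (1 - ‖y‖ ^ 2) / s ^ 2 with hq
  have hX : δ ≤ 1 - ‖x‖ ^ 2 := by nlinarith [norm_nonneg x]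
  have hp0 : 0 < p := div_pos (by linarith) (by positivity)
  have hq0 : 0 ≤ q := div_nonneg (by nlinarith [norm_nonneg y]) (by positivity)
  set ε := h / δ with hε
  have hε0 : 0 ≤ ε := by positivity
  have hε4 : ε ≤ 1 / 4 := by rw [hε, div_le_iff₀ hδ0]; linarith
  have hhε : h = ε * δ := by rw [hε]; field_simp
  -- `q = α * β * p` where both factors are within `O(ε)` of `1`.
  set α := (1 - ‖y‖ ^ 2) / (1 - ‖x‖ ^ 2) with hα
  set β := t ^ 2 / s ^ 2 with hβ
  have hX0 : 0 < 1 - ‖x‖ ^ 2 := by linarith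
  have hqp : q = α * β * p := by
    rw [hq, hα, hβ, hp]; field_simp
  have hα1 : |α - 1| ≤ 2 * ε := by
    have : α - 1 = (‖x‖ ^ 2 - ‖y‖ ^ 2) / (1 - ‖x‖ ^ 2) := by rw [hα]; field_simp; ring
    rw [this, abs_div, abs_of_pos hX0, div_le_iff₀ hX0]
    have h2 : |‖x‖ ^ 2 - ‖y‖ ^ 2| ≤ 2 * h := by
      rw [sq_sub_sq, abs_mul, abs_of_nonneg (by positivity)]
      exact mul_le_mul (by linarith) hnn (abs_nonneg _) (by norm_num)
    have h3 := mul_le_mul_of_nonneg_left hX hε0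
    linarith
  have hβ1 : |β - 1| ≤ 4 * ε := by
    have : β - 1 = (t - s) * (t + s) / s ^ 2 := by rw [hβ]; field_simp; ring
    rw [this, abs_div, abs_of_pos (by positivity : 0 < s ^ 2), div_le_iff₀ (by positivity), abs_mul,
      abs_of_pos (by linarith : 0 < t + s)]
    have h1 : |t - s| ≤ ε * t := hst.trans (by rw [hhε]; gcongr)
    have h2 : |t - s| * (t + s) ≤ ε * t * (t + s) := by gcongr
    have h3 : t * (t + s) ≤ 4 * s ^ 2 := by nlinarith
    nlinarith
  have hdiff : |p - q| ≤ 8 * ε * p := by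
    have h1 : p - q = -((α - 1) * β + (β - 1)) * p := by rw [hqp]; ring
    have hβ2 : |β| ≤ 2 := by
      have := abs_le.1 hβ1
      rw [abs_le]; constructor <;> linarith
    rw [h1, abs_mul, abs_neg, abs_of_pos hp0]
    refine mul_le_mul_of_nonneg_right ?_ hp0.le
    calc |(α - 1) * β + (β - 1)| ≤ |α - 1| * |β| + |β - 1| := by
          rw [← abs_mul]; exact abs_add_le _ _
      _ ≤ 2 * ε * 2 + 4 * ε := by gcongr
      _ = 8 * ε := by ring
  exact abs_pow_sub_pow_le_of_close hp0 hq0 hε0 hε4 hdiff _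

/-! ### The Poisson integral -/

lemma continuous_boundary {n : ℕ} {ω : ℝ → ℝ} (hω : IsMajorant ω) {φ : En n → En n}
    (hφ : ∀ ξ ∈ sphere (0 : En n) 1, ∀ η ∈ sphere (0 : En n) 1, ‖φ ξ - φ η‖ ≤ ω ‖ξ - η‖) :
    Continuous fun ξ : sphere (0 : En n) 1 => φ (ξ : En n) := by
  rw [continuous_iff_continuousAt]
  intro η
  rw [ContinuousAt, tendsto_iff_norm_sub_tendsto_zero]
  have hc : Continuous fun ξ : sphere (0 : En n) 1 => ω ‖(ξ : En n) - η‖ :=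
    hω.1.comp_continuous (by fun_prop) fun ξ => norm_nonneg _
  have h1 := hc.tendsto η
  simp only [sub_self, norm_zero, hω.2.2.1] at h1
  exact squeeze_zero (fun _ => norm_nonneg _) (fun ξ => hφ ξ ξ.2 η η.2) h1

/-- The radius is written `1 - (1 - ‖x‖)` to match the form `(1 - δ) • ζ` with `δ = 1 - ‖x‖`. -/
lemma exists_radial {n : ℕ} (hn : 1 ≤ n) (x : En n) :
    ∃ ζ : En n, ‖ζ‖ = 1 ∧ x = (1 - (1 - ‖x‖)) • ζ := by
  rcases eq_or_ne x 0 with rfl | hx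
  · exact ⟨EuclideanSpace.single ⟨0, hn⟩ 1, by simp, by simp⟩
  · have := norm_ne_zero_iff.2 hx
    refine ⟨‖x‖⁻¹ • x, ?_, ?_⟩
    · rw [norm_smul, norm_inv, norm_norm, inv_mul_cancel₀ this]
    · rw [smul_smul, sub_sub_cancel, mul_inv_cancel₀ this, one_smul]

/-- `ω`-Lipschitz continuity of the Poisson integral `Φ = P_h[φ]`. -/
theorem stmt_2 (n : ℕ) (hn : 3 ≤ n) (ω : ℝ → ℝ) (hω : IsFastMajorant ω) :
    ∃ C' : ℝ, ∀ φ : En n → En n,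
      (∀ ξ ∈ sphere (0 : En n) 1, ∀ η ∈ sphere (0 : En n) 1,
        ‖φ ξ - φ η‖ ≤ ω ‖ξ - η‖) →
      ∀ x ∈ ball (0 : En n) 1, ∀ y ∈ ball (0 : En n) 1,
        ‖PhInt n φ x - PhInt n φ y‖ ≤ C' * ω ‖x - y‖ := by
  have hM := hω.1
  set B : ℝ := 8 * ((n - 1 : ℕ) : ℝ) * 3 ^ (n - 1 - 1) with hB
  have hB0 : 0 ≤ B := by positivity
  refine ⟨343 + 37 * B, fun φ hφ x hx y hy => ?_⟩
  rw [mem_ball_zero_iff] at hx hy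
  have hφc := continuous_boundary hM hφ
  have hPφ : ∀ z : En n, ‖z‖ < 1 →
      Integrable (fun ξ => Ph n z ξ • φ (ξ : En n)) (sigmaMeasure n) := fun z hz =>
    integrable_of_cont (by omega) ((continuous_Ph hz).smul hφc)
  have hPc : ∀ z : En n, ‖z‖ < 1 → ∀ v : En n,
      Integrable (fun ξ => Ph n z ξ • v) (sigmaMeasure n) := fun z hz v =>
    integrable_of_cont (by omega) ((continuous_Ph hz).smul continuous_const)
  have hsub : ∀ z : En n, ‖z‖ < 1 → ∀ v : En n,
      PhInt n φ z - v = ∫ ξ, Ph n z ξ • (φ (ξ : En n) - v) ∂(sigmaMeasure n) := by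
    intro z hz v
    simp_rw [smul_sub]
    rw [integral_sub (hPφ z hz) (hPc z hz v), integral_smul_const, integral_Ph (by omega) hz,
      one_smul, PhInt]
  have hPi : ∀ z : En n, ‖z‖ < 1 → ∀ v : En n,
      Integrable (fun ξ => Ph n z ξ • (φ (ξ : En n) - v)) (sigmaMeasure n) := fun z hz v =>
    integrable_of_cont (by omega) ((continuous_Ph hz).smul (hφc.sub continuous_const))
  rcases eq_or_ne x y with rfl | hne
  · simp [hM.2.2.1]
  set h := ‖x - y‖ with hh
  have hh0 : 0 < h := norm_pos_iff.2 (sub_ne_zero.2 hne)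
  have hωh : 0 ≤ ω h := hM.2.2.2.1 h hh0.le
  obtain ⟨ζ, hζ, hxζ⟩ := exists_radial (by omega) x
  obtain ⟨η, hη, hyη⟩ := exists_radial (by omega) y
  have hδx : 0 < 1 - ‖x‖ := by linarith
  have hδy : 0 < 1 - ‖y‖ := by linarith
  have hδx1 : 1 - ‖x‖ ≤ 1 := by linarith [norm_nonneg x]
  have hδy1 : 1 - ‖y‖ ≤ 1 := by linarith [norm_nonneg y]
  -- Either `y` is close to `x` relative to the boundary distance, and the kernels are compared, or
  -- both points are within `5 * h` of the sphere, and are compared with their radial projections.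
  rcases le_or_gt h ((1 - ‖x‖) / 4) with hcase | hcase
  · have h1 : PhInt n φ x - PhInt n φ y =
        ∫ ξ, (Ph n x ξ - Ph n y ξ) • (φ (ξ : En n) - φ ζ) ∂(sigmaMeasure n) := by
      rw [← sub_sub_sub_cancel_right _ _ (φ ζ), hsub x hx, hsub y hy,
        ← integral_sub (hPi x hx _) (hPi y hy _)]
      simp_rw [sub_smul]
    have h2 := weighted_bound hn hM hφ hζ hδx hδx1 (K := fun ξ => Ph n x ξ - Ph n y ξ)
      (A := B * (h / (1 - ‖x‖))) (by positivity)
      (fun ξ => by rw [← hxζ]; exact Ph_harnack hx hy hcase ξ)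
    have h3 : h / (1 - ‖x‖) * ω (1 - ‖x‖) ≤ ω h := by
      have := hM.2.2.2.2 h (1 - ‖x‖) hh0 (by linarith)
      rw [le_div_iff₀ hh0] at this
      calc h / (1 - ‖x‖) * ω (1 - ‖x‖) = ω (1 - ‖x‖) / (1 - ‖x‖) * h := by ring
        _ ≤ ω h := this
    rw [h1]
    nlinarith [mul_le_mul_of_nonneg_left h3 hB0]
  · have key : ∀ z : En n, ‖z‖ < 1 → ∀ v : En n, ‖v‖ = 1 → z = (1 - (1 - ‖z‖)) • v →
        ‖PhInt n φ z - φ v‖ ≤ 37 * ω (1 - ‖z‖) := by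
      intro z hz v hv hzv
      rw [hsub z hz]
      have := weighted_bound hn hM hφ hv (δ := 1 - ‖z‖) (by linarith) (by linarith [norm_nonneg z])
        (K := Ph n z) (A := 1) zero_le_one
        (fun ξ => by rw [← hzv, one_mul, abs_of_nonneg (Ph_nonneg hz ξ)])
      simpa using this
    have hdist : ∀ z : En n, ‖z‖ < 1 → ∀ v : En n, ‖v‖ = 1 → z = (1 - (1 - ‖z‖)) • v →
        ‖z - v‖ = 1 - ‖z‖ := by
      intro z hz v hv hzv
      have : z - v = -((1 - ‖z‖) • v) := by
        nth_rewrite 1 [hzv]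
        module
      rw [this, norm_neg, norm_smul, hv, Real.norm_of_nonneg (by linarith), mul_one]
    have hxy : ‖x‖ - ‖y‖ ≤ h := norm_sub_norm_le x y
    have mono : ∀ c u : ℝ, 1 ≤ c → 0 ≤ u → u ≤ c * h → ω u ≤ c * ω h := fun c u hc hu huc =>
      (hM.2.1 hu (mem_Ici.2 (hu.trans huc)) huc).trans (majorant_scale hM hc hh0)
    have e1 := mono 4 (1 - ‖x‖) (by norm_num) hδx.le (by linarith)
    have e2 := mono 5 (1 - ‖y‖) (by norm_num) hδy.le (by linarith)
    have hζη : ‖ζ - η‖ ≤ 10 * h := by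
      have t1 : ζ - η = -(x - ζ) + (x - y) + (y - η) := by abel
      have t2 : ‖ζ - η‖ ≤ ‖-(x - ζ)‖ + ‖x - y‖ + ‖y - η‖ := by rw [t1]; exact norm_add₃_le
      rw [norm_neg, hdist x hx ζ hζ hxζ, hdist y hy η hη hyη] at t2
      linarith
    have e3 := mono 10 ‖ζ - η‖ (by norm_num) (norm_nonneg _) hζη
    have e4 := hφ ζ (by simpa using hζ) η (by simpa using hη)
    have t1 : PhInt n φ x - PhInt n φ y =
        (PhInt n φ x - φ ζ) + (φ ζ - φ η) + -(PhInt n φ y - φ η) := by abel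
    have t2 : ‖PhInt n φ x - PhInt n φ y‖ ≤
        ‖PhInt n φ x - φ ζ‖ + ‖φ ζ - φ η‖ + ‖-(PhInt n φ y - φ η)‖ := by
      rw [t1]; exact norm_add₃_le
    rw [norm_neg] at t2
    have k1 := key x hx ζ hζ hxζ
    have k2 := key y hy η hη hyη
    have := mul_nonneg hB0 hωh
    linarith
end

section
/- Let n ≥ 3 and let ψ ∈ C(𝔹ⁿ,ℝⁿ) satisfy |ψ(x)| ≤ M(1−|x|²) for all x ∈ 𝔹ⁿ, where M ≥ 0 is a constant. Then there exists a constant β₀ depending only on n and M such that, with Ψ = G_h[ψ], one has |Ψ(x) − Ψ(y)| ≤ β₀ |x−y| for all x, y ∈ 𝔹ⁿ. -/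
/-!
Write `r = |φ_x(y)| = |x-y| / [x,y]`, so that `1 - r² = (1-|x|²)(1-|y|²) / [x,y]²`. The squared norm
of the numerator of `φ_x(y)` is `|x-y|² [x,y]²` (`normSq_mobius_num`), and the gradient of `r²` in
`x` is a multiple of this numerator; hence `|∇ₓ r| ≤ (1-|y|²) / [x,y]²` (`hasDerivAt_norm_mobius`).
Since `g'(r) = -(1/n) (1-r²)^{n-2} r^{1-n}`, the Green function satisfies
`|∇ₓ G_h(x,y)| ≤ (1-|y|²)^{n-1} k(x,y)` with
`k(x,y) = (1-|x|²)^{n-2} / ([x,y]^{n-1} |x-y|^{n-1})` (`gradKernel`, `hasDerivAt_Gh`), and likewise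
`|G_h(x,y)| ≤ (1-|y|²)^{n-1} (1-|x|²) k(x,y)` (`abs_Gh_le`).

The factor `(1-|y|²)^{n-1}`, together with the bound on `ψ`, cancels the density of `τ`
(`setLIntegral_tau_le`), so everything reduces to bounding `∫ k(x,y) dν(y)` uniformly in `x`.
With `δ = 1-|x|`, the inequalities `[x,y] ≥ δ` and `[x,y] ≥ |x-y|` give
`k(x,y) ≤ 2^{n-1} δ / ((|x-y|²+δ²) |x-y|^{n-1})` (`gradKernel_le`); this is where `n ≥ 3` enters. In
polar coordinates about `x` the integral of the right side is a multiple of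
`∫₀^∞ δ / (ρ²+δ²) dρ = π/2`, which is independent of `δ` (`exists_lintegral_radial_le`).

The Lipschitz bound follows by integrating the gradient estimate along the segment from `x` to `x'`,
which is legitimate for every `y` off the line through the two points, a null set
(`abs_Gh_sub_le`, `ae_notMem_line`), and exchanging the two integrals by Tonelli's theorem.
-/

open MeasureTheory Metric Set

/-! ### The pseudo-hyperbolic distance -/

/-- `[x,y]²`, as a polynomial expression. -/
noncomputable def bracketSq {n : ℕ} (x y : En n) : ℝ :=
  ‖y - x‖ ^ 2 + (1 - ‖y‖ ^ 2) * (1 - ‖x‖ ^ 2)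

/-- `[x,y]² ≥ (1 - |x||y|)²`, by Cauchy–Schwarz. -/
lemma bracketSq_ge {n : ℕ} (x y : En n) : (1 - ‖x‖ * ‖y‖) ^ 2 ≤ bracketSq x y := by
  have h1 := norm_sub_sq_real y x
  have h2 := real_inner_le_norm y x
  unfold bracketSq
  nlinarith

lemma bracketSq_nonneg {n : ℕ} (x y : En n) : 0 ≤ bracketSq x y :=
  (sq_nonneg _).trans (bracketSq_ge x y)

lemma one_sub_normSq_pos {n : ℕ} {x : En n} (hx : x ∈ ball (0 : En n) 1) : 0 < 1 - ‖x‖ ^ 2 := by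
  rw [mem_ball_zero_iff] at hx
  nlinarith [norm_nonneg x]

lemma bracketSq_pos {n : ℕ} {x y : En n} (hx : x ∈ ball (0 : En n) 1)
    (hy : y ∈ ball (0 : En n) 1) : 0 < bracketSq x y := by
  have := mul_pos (one_sub_normSq_pos hy) (one_sub_normSq_pos hx)
  unfold bracketSq
  positivity

lemma qbracket_sq {n : ℕ} (x y : En n) : qbracket x y ^ 2 = bracketSq x y :=
  Real.sq_sqrt (bracketSq_nonneg x y)

lemma qbracket_pos {n : ℕ} {x y : En n} (hx : x ∈ ball (0 : En n) 1)
    (hy : y ∈ ball (0 : En n) 1) : 0 < qbracket x y :=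
  Real.sqrt_pos.2 (bracketSq_pos hx hy)

/-- The numerator of `φ_x(y)` has norm `|x-y| [x,y]`. -/
lemma normSq_mobius_num {n : ℕ} (x y : En n) :
    ‖‖y - x‖ ^ 2 • x - (1 - ‖x‖ ^ 2) • (y - x)‖ ^ 2 = ‖y - x‖ ^ 2 * bracketSq x y := by
  obtain ⟨h, rfl⟩ : ∃ h, y = x + h := ⟨y - x, by simp⟩
  rw [norm_sub_sq_real, norm_smul, norm_smul, real_inner_smul_left, real_inner_smul_right]
  unfold bracketSq
  simp only [add_sub_cancel_left, norm_add_sq_real, mul_pow, Real.norm_eq_abs, sq_abs]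
  ring

lemma norm_mobius {n : ℕ} (x y : En n) :
    ‖mobius x y‖ = Real.sqrt (‖y - x‖ ^ 2 / bracketSq x y) := by
  rw [eq_comm, Real.sqrt_eq_iff_mul_self_eq (by have := bracketSq_nonneg x y; positivity)
    (norm_nonneg _), ← pow_two]
  unfold mobius
  rw [norm_smul, mul_pow, normSq_mobius_num, qbracket_sq, Real.norm_eq_abs, sq_abs]
  by_cases h : bracketSq x y = 0
  · simp [h]
  · field_simp

lemma norm_mobius_eq_div {n : ℕ} (x y : En n) :
    ‖mobius x y‖ = ‖y - x‖ / qbracket x y := by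
  rw [norm_mobius, Real.sqrt_div (by positivity), Real.sqrt_sq (norm_nonneg _)]
  rfl

lemma one_sub_normSq_mobius {n : ℕ} {x y : En n} (hx : x ∈ ball (0 : En n) 1)
    (hy : y ∈ ball (0 : En n) 1) :
    1 - ‖mobius x y‖ ^ 2 = (1 - ‖x‖ ^ 2) * (1 - ‖y‖ ^ 2) / qbracket x y ^ 2 := by
  have h := bracketSq_pos hx hy
  rw [norm_mobius_eq_div, div_pow, qbracket_sq]
  field_simp
  unfold bracketSq
  ring

lemma norm_mobius_pos {n : ℕ} {x y : En n} (hx : x ∈ ball (0 : En n) 1)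
    (hy : y ∈ ball (0 : En n) 1) (hxy : y ≠ x) : 0 < ‖mobius x y‖ := by
  rw [norm_mobius_eq_div]
  exact div_pos (norm_pos_iff.2 (sub_ne_zero.2 hxy)) (qbracket_pos hx hy)

lemma norm_mobius_lt_one {n : ℕ} {x y : En n} (hx : x ∈ ball (0 : En n) 1)
    (hy : y ∈ ball (0 : En n) 1) : ‖mobius x y‖ < 1 := by
  have h := one_sub_normSq_mobius hx hy
  have : 0 < (1 - ‖x‖ ^ 2) * (1 - ‖y‖ ^ 2) / qbracket x y ^ 2 :=
    div_pos (mul_pos (one_sub_normSq_pos hx) (one_sub_normSq_pos hy))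
      (pow_pos (qbracket_pos hx hy) 2)
  nlinarith [norm_nonneg (mobius x y)]

/-- Along a line, `|φ_x(y)|` has speed at most `(1-|y|²)/[x,y]²` times the Euclidean speed:
the gradient of `|φ_x(y)|²` in `x` is a multiple of the numerator of `φ_x(y)`. -/
lemma hasDerivAt_norm_mobius {n : ℕ} (x v y : En n) (t : ℝ)
    (hx : x + t • v ∈ ball (0 : En n) 1) (hy : y ∈ ball (0 : En n) 1) (hxy : y ≠ x + t • v) :
    ∃ D : ℝ, HasDerivAt (fun s : ℝ => ‖mobius (x + s • v) y‖) D t ∧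
      |D| ≤ (1 - ‖y‖ ^ 2) * ‖v‖ / qbracket (x + t • v) y ^ 2 := by
  have hQ := bracketSq_pos hx hy
  have hy1 := one_sub_normSq_pos hy
  have hd : 0 < ‖y - (x + t • v)‖ := norm_pos_iff.2 (sub_ne_zero.2 hxy)
  have hp : HasDerivAt (fun s : ℝ => x + s • v) v t := by
    simpa using ((hasDerivAt_id t).smul_const v).const_add x
  have h1 : HasDerivAt (fun s : ℝ => ‖y - (x + s • v)‖ ^ 2)
      (2 * inner ℝ (y - (x + t • v)) (-v)) t := (hp.const_sub y).norm_sq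
  have h2 : HasDerivAt (fun s : ℝ => ‖x + s • v‖ ^ 2) (2 * inner ℝ (x + t • v) v) t := hp.norm_sq
  have h3 : HasDerivAt (fun s : ℝ => bracketSq (x + s • v) y) _ t :=
    h1.add ((h2.const_sub 1).const_mul (1 - ‖y‖ ^ 2))
  have h4 := (h1.div h3 hQ.ne').sqrt (by simp only [Pi.div_apply]; positivity)
  refine ⟨_, h4.congr_of_eventuallyEq (.of_forall fun s => by
    simp only [norm_mobius, Pi.div_apply]), ?_⟩
  simp only [Pi.div_apply]
  rw [qbracket_sq]
  generalize x + t • v = p at *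
  have hN := normSq_mobius_num p y
  set N := ‖y - p‖ ^ 2 • p - (1 - ‖p‖ ^ 2) • (y - p) with hNdef
  have key : 2 * inner ℝ (y - p) (-v) * bracketSq p y - ‖y - p‖ ^ 2 *
      (2 * inner ℝ (y - p) (-v) + (1 - ‖y‖ ^ 2) * -(2 * inner ℝ p v)) =
      2 * (1 - ‖y‖ ^ 2) * inner ℝ N v := by
    rw [hNdef, inner_sub_left (‖y - p‖ ^ 2 • p), real_inner_smul_left, real_inner_smul_left,
      inner_neg_right]
    unfold bracketSq
    ring
  rw [key]
  set q := Real.sqrt (bracketSq p y)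
  have hq : 0 < q := Real.sqrt_pos.2 hQ
  have hq2 : bracketSq p y = q ^ 2 := (Real.sq_sqrt hQ.le).symm
  have hNn : ‖N‖ = ‖y - p‖ * q := by
    rw [hq2, ← mul_pow] at hN
    exact (sq_eq_sq₀ (norm_nonneg _) (by positivity)).1 hN
  have hs : Real.sqrt (‖y - p‖ ^ 2 / bracketSq p y) = ‖y - p‖ / q := by
    rw [hq2, ← div_pow, Real.sqrt_sq (by positivity)]
  have hi := abs_real_inner_le_norm N v
  rw [hs, hq2, abs_div, abs_div, abs_mul, abs_mul, abs_of_pos hy1, abs_of_pos (two_pos),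
    abs_of_pos (by positivity : 0 < (q ^ 2) ^ 2), abs_of_pos (by positivity : 0 < 2 * (‖y - p‖ / q))]
  calc 2 * (1 - ‖y‖ ^ 2) * |inner ℝ N v| / (q ^ 2) ^ 2 / (2 * (‖y - p‖ / q))
      ≤ 2 * (1 - ‖y‖ ^ 2) * (‖y - p‖ * q * ‖v‖) / (q ^ 2) ^ 2 / (2 * (‖y - p‖ / q)) := by
        rw [hNn] at hi; gcongr
    _ = (1 - ‖y‖ ^ 2) * ‖v‖ / q ^ 2 := by field_simp

/-! ### The radial profile `g` -/

lemma continuousOn_gfun_integrand (n : ℕ) :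
    ContinuousOn (fun s : ℝ => (1 - s ^ 2) ^ (n - 2) / s ^ (n - 1)) (Ioi 0) :=
  ContinuousOn.div (by fun_prop) (by fun_prop) fun s hs => (pow_pos hs _).ne'

lemma hasDerivAt_gfun (n : ℕ) {r : ℝ} (hr : 0 < r) :
    HasDerivAt (gfun n) (-((1 / (n : ℝ)) * ((1 - r ^ 2) ^ (n - 2) / r ^ (n - 1)))) r := by
  have hc := continuousOn_gfun_integrand n
  have hi : IntervalIntegrable (fun s : ℝ => (1 - s ^ 2) ^ (n - 2) / s ^ (n - 1)) volume r 1 :=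
    (hc.mono fun s hs => lt_of_lt_of_le (lt_min hr one_pos) hs.1).intervalIntegrable
  have := (intervalIntegral.integral_hasDerivAt_left hi
    (hc.stronglyMeasurableAtFilter isOpen_Ioi r hr)
    (hc.continuousAt (Ioi_mem_nhds hr))).const_mul (1 / (n : ℝ))
  rw [mul_neg] at this
  exact this

lemma abs_gfun_le (n : ℕ) (hn : 3 ≤ n) {r : ℝ} (hr : 0 < r) (hr1 : r < 1) :
    |gfun n r| ≤ (1 - r ^ 2) ^ (n - 1) / r ^ (n - 1) := by
  have hr2 : 0 ≤ 1 - r ^ 2 := by nlinarith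
  have h1 : ‖∫ s in r..(1 : ℝ), (1 - s ^ 2) ^ (n - 2) / s ^ (n - 1)‖ ≤
      (1 - r ^ 2) ^ (n - 2) / r ^ (n - 1) * |1 - r| := by
    apply intervalIntegral.norm_integral_le_of_norm_le_const
    intro s hs
    rw [uIoc_of_le hr1.le] at hs
    have hs0 : 0 < s := hr.trans hs.1
    have : 0 ≤ 1 - s ^ 2 := by nlinarith [hs.2]
    rw [Real.norm_of_nonneg (by positivity)]
    gcongr <;> exact hs.1.le
  have h2 : (1 / (n : ℝ)) ≤ 1 := by
    rw [div_le_one (by positivity)]; exact_mod_cast (by omega : 1 ≤ n)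
  rw [Real.norm_eq_abs, abs_of_pos (sub_pos.2 hr1)] at h1
  unfold gfun
  rw [abs_mul, abs_of_nonneg (by positivity : 0 ≤ 1 / (n : ℝ))]
  calc _ ≤ 1 * ((1 - r ^ 2) ^ (n - 2) / r ^ (n - 1) * (1 - r)) := by gcongr
    _ ≤ 1 * ((1 - r ^ 2) ^ (n - 2) / r ^ (n - 1) * (1 - r ^ 2)) := by gcongr; nlinarith
    _ = _ := by
      rw [show n - 1 = n - 2 + 1 by omega]; ring

/-! ### Pointwise estimates of the Green function -/

/-- The kernel `(1-|x|²)^{n-2} / ([x,y]^{n-1} |x-y|^{n-1})`, which up to the factor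
`(1-|y|²)^{n-1}` dominates `|∇ₓ G_h(x,y)|`. -/
noncomputable def gradKernel (n : ℕ) (x y : En n) : ℝ :=
  (1 - ‖x‖ ^ 2) ^ (n - 2) / (qbracket x y ^ (n - 1) * ‖y - x‖ ^ (n - 1))

lemma gradKernel_nonneg {n : ℕ} {x : En n} (hx : x ∈ ball (0 : En n) 1) (y : En n) :
    0 ≤ gradKernel n x y := by
  have h1 := one_sub_normSq_pos hx
  have h2 : 0 ≤ qbracket x y := Real.sqrt_nonneg _
  unfold gradKernel
  positivity

lemma abs_Gh_le (n : ℕ) (hn : 3 ≤ n) {x y : En n} (hx : x ∈ ball (0 : En n) 1)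
    (hy : y ∈ ball (0 : En n) 1) (hxy : y ≠ x) :
    |Gh n x y| ≤ (1 - ‖y‖ ^ 2) ^ (n - 1) * ((1 - ‖x‖ ^ 2) * gradKernel n x y) := by
  refine (abs_gfun_le n hn (norm_mobius_pos hx hy hxy) (norm_mobius_lt_one hx hy)).trans_eq ?_
  rw [one_sub_normSq_mobius hx hy, norm_mobius_eq_div]
  have hq := qbracket_pos hx hy
  have hd : 0 < ‖y - x‖ := norm_pos_iff.2 (sub_ne_zero.2 hxy)
  unfold gradKernel
  rw [show n - 1 = n - 2 + 1 by omega]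
  simp only [div_pow, mul_pow, ← pow_mul]
  field_simp
  ring

lemma hasDerivAt_Gh (n : ℕ) (hn : 3 ≤ n) (x v y : En n) (t : ℝ)
    (hx : x + t • v ∈ ball (0 : En n) 1) (hy : y ∈ ball (0 : En n) 1) (hxy : y ≠ x + t • v) :
    ∃ D : ℝ, HasDerivAt (fun s : ℝ => Gh n (x + s • v) y) D t ∧
      |D| ≤ (1 - ‖y‖ ^ 2) ^ (n - 1) * ‖v‖ * gradKernel n (x + t • v) y := by
  obtain ⟨D, hD, hDb⟩ := hasDerivAt_norm_mobius x v y t hx hy hxy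
  have hr := norm_mobius_pos hx hy hxy
  refine ⟨_, HasDerivAt.comp t (hasDerivAt_gfun n hr) hD, ?_⟩
  have hq := qbracket_pos hx hy
  have hd : 0 < ‖y - (x + t • v)‖ := norm_pos_iff.2 (sub_ne_zero.2 hxy)
  have h1 := one_sub_normSq_mobius hx hy
  have hA := one_sub_normSq_pos hx
  have hB := one_sub_normSq_pos hy
  have h2 : (1 / (n : ℝ)) ≤ 1 := by
    rw [div_le_one (by positivity)]; exact_mod_cast (by omega : 1 ≤ n)
  rw [abs_mul, abs_neg, h1, norm_mobius_eq_div, abs_of_nonneg (by positivity)]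
  generalize x + t • v = p at *
  calc 1 / (n : ℝ) * (((1 - ‖p‖ ^ 2) * (1 - ‖y‖ ^ 2) / qbracket p y ^ 2) ^ (n - 2) /
          (‖y - p‖ / qbracket p y) ^ (n - 1)) * |D|
      ≤ 1 * (((1 - ‖p‖ ^ 2) * (1 - ‖y‖ ^ 2) / qbracket p y ^ 2) ^ (n - 2) /
          (‖y - p‖ / qbracket p y) ^ (n - 1)) *
            ((1 - ‖y‖ ^ 2) * ‖v‖ / qbracket p y ^ 2) := by gcongr
    _ = _ := by
      unfold gradKernel
      rw [show n - 1 = n - 2 + 1 by omega]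
      simp only [div_pow, mul_pow, ← pow_mul]
      field_simp
      ring

lemma abs_sub_le_integral_of_hasDerivAt {f φ : ℝ → ℝ} (hφ : ContinuousOn φ (Icc 0 1))
    (hf : ∀ t ∈ Icc (0 : ℝ) 1, ∃ D, HasDerivAt f D t ∧ |D| ≤ φ t) :
    |f 1 - f 0| ≤ ∫ t in (0 : ℝ)..1, φ t := by
  have h1 : ∀ t ∈ Icc (0 : ℝ) 1, HasDerivAt f (deriv f t) t ∧ |deriv f t| ≤ φ t := by
    intro t ht
    obtain ⟨D, hD, hb⟩ := hf t ht
    rw [hD.deriv]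
    exact ⟨hD, hb⟩
  have hc : ContinuousOn f (Icc 0 1) := fun t ht => (h1 t ht).1.continuousAt.continuousWithinAt
  have hi : IntegrableOn φ (Icc 0 1) := hφ.integrableOn_Icc
  have hle := intervalIntegral.sub_le_integral_of_hasDeriv_right_of_le zero_le_one hc
    (fun t ht => (h1 t (Ioo_subset_Icc_self ht)).1.hasDerivWithinAt) hi
    fun t ht => (le_abs_self _).trans (h1 t (Ioo_subset_Icc_self ht)).2
  have hle' := intervalIntegral.sub_le_integral_of_hasDeriv_right_of_le zero_le_one hc.neg
    (fun t ht => (h1 t (Ioo_subset_Icc_self ht)).1.neg.hasDerivWithinAt) hi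
    fun t ht => (neg_le_abs _).trans (h1 t (Ioo_subset_Icc_self ht)).2
  simp only [Pi.neg_apply] at hle'
  exact abs_le.2 ⟨by linarith, hle⟩

lemma segment_mem_ball {n : ℕ} {x v : En n} (hx : x ∈ ball (0 : En n) 1)
    (hx' : x + v ∈ ball (0 : En n) 1) {t : ℝ} (ht : t ∈ Icc (0 : ℝ) 1) :
    x + t • v ∈ ball (0 : En n) 1 :=
  (convex_ball (0 : En n) 1).add_smul_mem hx hx' ht

/-- The gradient bound for `G_h(·,y)`, integrated along a segment avoiding the pole `y`. -/
lemma abs_Gh_sub_le (n : ℕ) (hn : 3 ≤ n) {x v y : En n} (hx : x ∈ ball (0 : En n) 1)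
    (hx' : x + v ∈ ball (0 : En n) 1) (hy : y ∈ ball (0 : En n) 1)
    (hxy : ∀ t : ℝ, y ≠ x + t • v) :
    ENNReal.ofReal |Gh n (x + v) y - Gh n x y| ≤
      ENNReal.ofReal ((1 - ‖y‖ ^ 2) ^ (n - 1) * ‖v‖) *
        ∫⁻ t in Icc (0 : ℝ) 1, ENNReal.ofReal (gradKernel n (x + t • v) y) := by
  have hB := one_sub_normSq_pos hy
  have hc : ContinuousOn (fun t : ℝ => gradKernel n (x + t • v) y) (Icc 0 1) := by
    unfold gradKernel qbracket
    refine ContinuousOn.div (by fun_prop) (by fun_prop) fun t ht => ?_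
    exact mul_ne_zero (pow_pos (qbracket_pos (segment_mem_ball hx hx' ht) hy) _).ne'
      (pow_pos (norm_pos_iff.2 (sub_ne_zero.2 (hxy t))) _).ne'
  have h := abs_sub_le_integral_of_hasDerivAt (f := fun s : ℝ => Gh n (x + s • v) y)
    (φ := fun t => (1 - ‖y‖ ^ 2) ^ (n - 1) * ‖v‖ * gradKernel n (x + t • v) y)
    (hc.const_mul _) fun t ht =>
      hasDerivAt_Gh n hn x v y t (segment_mem_ball hx hx' ht) hy (hxy t)
  simp only [one_smul, zero_smul, add_zero] at h
  rw [intervalIntegral.integral_const_mul, intervalIntegral.integral_of_le zero_le_one,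
    ← integral_Icc_eq_integral_Ioc] at h
  refine (ENNReal.ofReal_le_ofReal h).trans_eq ?_
  rw [ENNReal.ofReal_mul (by positivity), ofReal_integral_eq_lintegral_ofReal hc.integrableOn_Icc]
  filter_upwards [ae_restrict_mem measurableSet_Icc] with t ht
  exact gradKernel_nonneg (segment_mem_ball hx hx' ht) y

/-! ### Uniform integrability of the kernel -/

/-- `[x,y]` dominates both `|x-y|` and `1-|x|`; the two factors of `[x,y]²` supply `|x-y|² + (1-|x|)²`
and the remaining `n-3` factors cancel powers of `1-|x|`. -/
lemma gradKernel_le (n : ℕ) (hn : 3 ≤ n) {x y : En n} (hx : x ∈ ball (0 : En n) 1)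
    (hy : y ∈ ball (0 : En n) 1) :
    gradKernel n x y ≤ 2 ^ (n - 1) *
      ((1 - ‖x‖) / ((‖y - x‖ ^ 2 + (1 - ‖x‖) ^ 2) * ‖y - x‖ ^ (n - 1))) := by
  obtain ⟨m, rfl⟩ : ∃ m, n = m + 3 := ⟨n - 3, by omega⟩
  unfold gradKernel
  simp only [show m + 3 - 1 = m + 2 by omega, show m + 3 - 2 = m + 1 by omega]
  have hA := one_sub_normSq_pos hx
  have hB := one_sub_normSq_pos hy
  have hq := qbracket_pos hx hy
  have hq2 := qbracket_sq x y
  have hge := bracketSq_ge x y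
  rw [mem_ball_zero_iff] at hx hy
  rcases (norm_nonneg (y - x)).eq_or_lt with h0 | hd
  · simp [← h0]
  have hδ : 0 < 1 - ‖x‖ := by linarith
  set δ := 1 - ‖x‖ with hδd
  have h1 : 1 - ‖x‖ ^ 2 ≤ 2 * δ := by rw [hδd]; nlinarith [norm_nonneg x]
  have h2 : δ ^ 2 ≤ qbracket x y ^ 2 := by
    rw [hq2]
    refine le_trans ?_ hge
    apply pow_le_pow_left₀ hδ.le
    nlinarith [norm_nonneg x, norm_nonneg y]
  have h3 : δ ≤ qbracket x y := (sq_le_sq₀ hδ.le hq.le).1 h2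
  have h4 : ‖y - x‖ ^ 2 ≤ qbracket x y ^ 2 := by
    rw [hq2]; unfold bracketSq; nlinarith [mul_pos hB hA]
  have h5 : δ ^ m * ((‖y - x‖ ^ 2 + δ ^ 2) / 2) ≤ qbracket x y ^ (m + 2) := by
    rw [pow_add]
    gcongr
    linarith
  calc _ ≤ (2 * δ) ^ (m + 1) / (δ ^ m * ((‖y - x‖ ^ 2 + δ ^ 2) / 2) * ‖y - x‖ ^ (m + 2)) := by
        gcongr
    _ = _ := by
        rw [mul_pow]
        field_simp
        ring

/-- In polar coordinates the radial majorant is the Poisson kernel of the half-plane, whose mass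
does not depend on the height `δ`. -/
lemma exists_lintegral_radial_le (n : ℕ) (hn : 3 ≤ n) :
    ∃ C : ℝ, ∀ δ : ℝ, 0 < δ →
      ∫⁻ z : En n, ENNReal.ofReal (δ / ((‖z‖ ^ 2 + δ ^ 2) * ‖z‖ ^ (n - 1))) ≤ ENNReal.ofReal C := by
  have : Nonempty (Fin n) := ⟨⟨0, by omega⟩⟩
  refine ⟨n • (volume.real (ball (0 : En n) 1)) • ∫ y in Ioi (0 : ℝ), (1 + y ^ 2)⁻¹,
    fun δ hδ => ?_⟩
  set f : ℝ → ℝ := fun r => δ / ((r ^ 2 + δ ^ 2) * r ^ (n - 1)) with hf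
  have hdim : Module.finrank ℝ (En n) = n := by simp
  have hfe : ∀ r ∈ Ioi (0 : ℝ), r ^ (n - 1) • f r = δ⁻¹ * (1 + (δ⁻¹ * r) ^ 2)⁻¹ := by
    intro r (hr : 0 < r)
    simp only [hf, smul_eq_mul]
    field_simp
    ring
  have hint : Integrable (fun z : En n => f ‖z‖) := by
    rw [integrable_fun_norm_addHaar, hdim, integrableOn_congr_fun hfe measurableSet_Ioi]
    exact ((integrable_inv_one_add_sq.comp_mul_left' (inv_ne_zero hδ.ne')).const_mul _).integrableOn
  rw [← ofReal_integral_eq_lintegral_ofReal hint (.of_forall fun z => by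
      simp only [hf, Pi.zero_apply]; positivity),
    integral_fun_norm_addHaar, hdim, setIntegral_congr_fun measurableSet_Ioi hfe,
    integral_const_mul, integral_comp_mul_left_Ioi (fun y : ℝ => (1 + y ^ 2)⁻¹) 0 (inv_pos.2 hδ)]
  simp only [mul_zero, smul_eq_mul, inv_inv]
  rw [inv_mul_cancel_left₀ hδ.ne']

lemma exists_lintegral_gradKernel_le (n : ℕ) (hn : 3 ≤ n) :
    ∃ C : ENNReal, C ≠ ⊤ ∧ ∀ x ∈ ball (0 : En n) 1,
      ∫⁻ y in ball (0 : En n) 1, ENNReal.ofReal (gradKernel n x y) ∂(nuMeasure n) ≤ C := by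
  obtain ⟨C, hC⟩ := exists_lintegral_radial_le n hn
  refine ⟨(volume (ball (0 : En n) 1))⁻¹ * (ENNReal.ofReal (2 ^ (n - 1)) * ENNReal.ofReal C), ?_,
    fun x hx => ?_⟩
  · have : (volume (ball (0 : En n) 1)) ≠ 0 := (measure_ball_pos _ _ one_pos).ne'
    exact ENNReal.mul_ne_top (ENNReal.inv_ne_top.2 this)
      (ENNReal.mul_ne_top ENNReal.ofReal_ne_top ENNReal.ofReal_ne_top)
  unfold nuMeasure
  rw [Measure.restrict_smul, lintegral_smul_measure, smul_eq_mul]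
  gcongr
  have hδ : 0 < 1 - ‖x‖ := by rw [mem_ball_zero_iff] at hx; linarith
  calc ∫⁻ y in ball (0 : En n) 1, ENNReal.ofReal (gradKernel n x y)
      ≤ ∫⁻ y in ball (0 : En n) 1, ENNReal.ofReal (2 ^ (n - 1)) * ENNReal.ofReal
          ((1 - ‖x‖) / ((‖y - x‖ ^ 2 + (1 - ‖x‖) ^ 2) * ‖y - x‖ ^ (n - 1))) := by
        refine setLIntegral_mono' measurableSet_ball fun y hy => ?_
        rw [← ENNReal.ofReal_mul (by positivity)]
        exact ENNReal.ofReal_le_ofReal (gradKernel_le n hn hx hy)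
    _ ≤ ∫⁻ y : En n, ENNReal.ofReal (2 ^ (n - 1)) * ENNReal.ofReal
          ((1 - ‖x‖) / ((‖y - x‖ ^ 2 + (1 - ‖x‖) ^ 2) * ‖y - x‖ ^ (n - 1))) :=
        setLIntegral_le_lintegral _ _
    _ = ENNReal.ofReal (2 ^ (n - 1)) * ∫⁻ z : En n, ENNReal.ofReal
          ((1 - ‖x‖) / ((‖z‖ ^ 2 + (1 - ‖x‖) ^ 2) * ‖z‖ ^ (n - 1))) := by
        rw [lintegral_const_mul' _ _ ENNReal.ofReal_ne_top, lintegral_sub_right_eq_self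
          (fun z : En n => ENNReal.ofReal
            ((1 - ‖x‖) / ((‖z‖ ^ 2 + (1 - ‖x‖) ^ 2) * ‖z‖ ^ (n - 1)))) x]
    _ ≤ _ := by gcongr; exact hC _ hδ

/-! ### The Green integral -/

lemma sFinite_nuMeasure (n : ℕ) : SFinite (nuMeasure n) := by
  unfold nuMeasure
  infer_instance

/-- A line is a null set, so almost every `y` stays off the segment joining two given points. -/
lemma ae_notMem_line (n : ℕ) (hn : 3 ≤ n) (x v : En n) :
    ∀ᵐ y ∂(nuMeasure n), ∀ t : ℝ, y ≠ x + t • v := by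
  have hs : Submodule.span ℝ {v} ≠ (⊤ : Submodule ℝ (En n)) := by
    intro h
    have h1 := finrank_span_le_card (R := ℝ) ({v} : Set (En n))
    rw [h, finrank_top, finrank_euclideanSpace_fin] at h1
    simp only [toFinset_singleton, Finset.card_singleton] at h1
    omega
  have h0 := Measure.addHaar_submodule (volume : Measure (En n)) _ hs
  have h1 : ∀ᵐ y : En n, y - x ∉ Submodule.span ℝ {v} := by
    rw [ae_iff]
    simp only [not_not]
    have := measure_preimage_add_right (volume : Measure (En n)) (-x)
      (Submodule.span ℝ {v} : Set (En n))
    rw [h0] at this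
    simp only [sub_eq_add_neg]
    exact this
  refine Measure.ae_smul_measure ?_ _
  filter_upwards [h1] with y hy t ht
  exact hy (Submodule.mem_span_singleton.2 ⟨t, by rw [ht]; simp⟩)

lemma tauMeasure_absolutelyContinuous (n : ℕ) : tauMeasure n ≪ nuMeasure n :=
  withDensity_absolutelyContinuous _ _

lemma ae_tau_notMem_line (n : ℕ) (hn : 3 ≤ n) (x v : En n) :
    ∀ᵐ y ∂(tauMeasure n), ∀ t : ℝ, y ≠ x + t • v :=
  (tauMeasure_absolutelyContinuous n).ae_le (ae_notMem_line n hn x v)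

lemma continuousOn_Gh (n : ℕ) {x : En n} (hx : x ∈ ball (0 : En n) 1) :
    ContinuousOn (fun y => Gh n x y) (ball (0 : En n) 1 \ {x}) := by
  have h1 : ContinuousOn (fun y => ‖mobius x y‖) (ball (0 : En n) 1 \ {x}) := by
    simp only [norm_mobius_eq_div]
    refine ContinuousOn.div (by fun_prop) ?_ fun y hy => (qbracket_pos hx hy.1).ne'
    unfold qbracket
    fun_prop
  have h2 : ContinuousOn (gfun n) (Ioi 0) := fun r hr =>
    (hasDerivAt_gfun n hr).continuousAt.continuousWithinAt
  exact h2.comp h1 fun y hy => norm_mobius_pos hx hy.1 hy.2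

lemma aestronglyMeasurable_Gh_smul (n : ℕ) (hn : 3 ≤ n) {ψ : En n → En n}
    (hψ : ContinuousOn ψ (ball (0 : En n) 1)) {x : En n} (hx : x ∈ ball (0 : En n) 1) :
    AEStronglyMeasurable (fun y => Gh n x y • ψ y)
      ((tauMeasure n).restrict (ball (0 : En n) 1)) := by
  have h0 : tauMeasure n {x} = 0 := by
    have := ae_tau_notMem_line n hn x 0
    simpa [ae_iff] using this
  rw [← Measure.restrict_congr_set (sdiff_null_ae_eq_self h0)]
  exact ((continuousOn_Gh n hx).smul (hψ.mono sdiff_subset)).aestronglyMeasurable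
    (measurableSet_ball.diff (measurableSet_singleton x))

/-- The density `(1-|y|²)^{-n}` of `τ` is compensated by the factor `(1-|y|²)^{n-1}` of the Green
function and its gradient together with the decay `1-|y|²` of `ψ`. -/
lemma setLIntegral_tau_le (n : ℕ) (hn : 3 ≤ n) {ψ : En n → En n} {M : ℝ} (hM : 0 ≤ M)
    (hψ : ∀ y ∈ ball (0 : En n) 1, ‖ψ y‖ ≤ M * (1 - ‖y‖ ^ 2)) {F : En n → ℝ}
    {k : En n → ENNReal} {c : ℝ}
    (hF : ∀ᵐ y ∂(nuMeasure n).restrict (ball (0 : En n) 1),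
      ENNReal.ofReal |F y| ≤ ENNReal.ofReal ((1 - ‖y‖ ^ 2) ^ (n - 1) * c) * k y) :
    ∫⁻ y in ball (0 : En n) 1, ‖F y • ψ y‖ₑ ∂(tauMeasure n) ≤
      ENNReal.ofReal (M * c) * ∫⁻ y in ball (0 : En n) 1, k y ∂(nuMeasure n) := by
  unfold tauMeasure
  rw [restrict_withDensity measurableSet_ball,
    ← lintegral_const_mul' _ _ ENNReal.ofReal_ne_top]
  refine (lintegral_withDensity_le_lintegral_mul _ (by fun_prop) _).trans (lintegral_mono_ae ?_)
  filter_upwards [hF, ae_restrict_mem measurableSet_ball] with y hFy hy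
  have hB := one_sub_normSq_pos hy
  simp only [Pi.mul_apply]
  rw [enorm_smul, Real.enorm_eq_ofReal_abs, ← ofReal_norm (ψ y)]
  calc ENNReal.ofReal ((1 - ‖y‖ ^ 2) ^ n)⁻¹ * (ENNReal.ofReal |F y| * ENNReal.ofReal ‖ψ y‖)
      ≤ ENNReal.ofReal ((1 - ‖y‖ ^ 2) ^ n)⁻¹ *
          (ENNReal.ofReal ((1 - ‖y‖ ^ 2) ^ (n - 1) * c) * k y *
            ENNReal.ofReal (M * (1 - ‖y‖ ^ 2))) := by
        gcongr
        exact hψ y hy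
    _ = ENNReal.ofReal (((1 - ‖y‖ ^ 2) ^ n)⁻¹ * (M * (1 - ‖y‖ ^ 2)) *
          ((1 - ‖y‖ ^ 2) ^ (n - 1) * c)) * k y := by
        rw [ENNReal.ofReal_mul (p := ((1 - ‖y‖ ^ 2) ^ n)⁻¹ * (M * (1 - ‖y‖ ^ 2))) (by positivity),
          ENNReal.ofReal_mul (p := ((1 - ‖y‖ ^ 2) ^ n)⁻¹) (by positivity)]
        ring
    _ = ENNReal.ofReal (M * c) * k y := by
        congr 2
        rw [← pow_sub_one_mul (by omega : n ≠ 0) (1 - ‖y‖ ^ 2)]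
        field_simp

lemma integrableOn_Gh_smul (n : ℕ) (hn : 3 ≤ n) {ψ : En n → En n} {M : ℝ} (hM : 0 ≤ M)
    (hc : ContinuousOn ψ (ball (0 : En n) 1))
    (hψ : ∀ y ∈ ball (0 : En n) 1, ‖ψ y‖ ≤ M * (1 - ‖y‖ ^ 2)) {x : En n}
    (hx : x ∈ ball (0 : En n) 1) :
    IntegrableOn (fun y => Gh n x y • ψ y) (ball (0 : En n) 1) (tauMeasure n) := by
  obtain ⟨C, hC, hCb⟩ := exists_lintegral_gradKernel_le n hn
  refine ⟨aestronglyMeasurable_Gh_smul n hn hc hx, ?_⟩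
  have hA := one_sub_normSq_pos hx
  have h := setLIntegral_tau_le n hn hM hψ (F := fun y => Gh n x y)
    (k := fun y => ENNReal.ofReal (gradKernel n x y)) (c := 1 - ‖x‖ ^ 2) (by
      filter_upwards [ae_restrict_of_ae (ae_notMem_line n hn x 0),
        ae_restrict_mem measurableSet_ball] with y hy hyB
      have hB := one_sub_normSq_pos hyB
      rw [← ENNReal.ofReal_mul (by positivity), mul_assoc]
      exact ENNReal.ofReal_le_ofReal (abs_Gh_le n hn hx hyB (by simpa using hy 0)))
  refine (h.trans (mul_le_mul_right (hCb x hx) _)).trans_lt ?_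
  exact ENNReal.mul_lt_top ENNReal.ofReal_lt_top hC.lt_top

lemma measurable_gradKernel_segment (n : ℕ) (x v : En n) :
    Measurable (fun p : En n × ℝ => ENNReal.ofReal (gradKernel n (x + p.2 • v) p.1)) := by
  unfold gradKernel qbracket
  fun_prop

/-- Lipschitz continuity of the Green integral `Ψ = G_h[ψ]`. -/
theorem stmt_3 (n : ℕ) (hn : 3 ≤ n) (M : ℝ) (hM : 0 ≤ M) :
    ∃ β₀ : ℝ, ∀ ψ : En n → En n,
      ContinuousOn ψ (ball (0 : En n) 1) →
      (∀ x ∈ ball (0 : En n) 1, ‖ψ x‖ ≤ M * (1 - ‖x‖ ^ 2)) →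
      ∀ x ∈ ball (0 : En n) 1, ∀ y ∈ ball (0 : En n) 1,
        ‖GhInt n ψ x - GhInt n ψ y‖ ≤ β₀ * ‖x - y‖ := by
  obtain ⟨C, hC, hCb⟩ := exists_lintegral_gradKernel_le n hn
  refine ⟨M * C.toReal, fun ψ hc hψ x' hx' x hx => ?_⟩
  have := sFinite_nuMeasure n
  obtain ⟨v, rfl⟩ : ∃ v, x' = x + v := ⟨x' - x, by simp⟩
  have hdiff : GhInt n ψ (x + v) - GhInt n ψ x =
      ∫ y in ball (0 : En n) 1, (Gh n (x + v) y - Gh n x y) • ψ y ∂(tauMeasure n) := by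
    unfold GhInt
    rw [← integral_sub (integrableOn_Gh_smul n hn hM hc hψ hx')
      (integrableOn_Gh_smul n hn hM hc hψ hx)]
    simp only [sub_smul]
  have hmain : ‖GhInt n ψ (x + v) - GhInt n ψ x‖ₑ ≤ ENNReal.ofReal (M * ‖v‖) * C := by
    rw [hdiff]
    refine (enorm_integral_le_lintegral_enorm _).trans ?_
    refine (setLIntegral_tau_le n hn hM hψ
      (k := fun y => ∫⁻ t in Icc (0 : ℝ) 1, ENNReal.ofReal (gradKernel n (x + t • v) y))
      (c := ‖v‖) ?_).trans ?_
    · filter_upwards [ae_restrict_of_ae (ae_notMem_line n hn x v),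
        ae_restrict_mem measurableSet_ball] with y hy hyB
      exact abs_Gh_sub_le n hn hx hx' hyB hy
    · gcongr
      rw [lintegral_lintegral_swap (measurable_gradKernel_segment n x v).aemeasurable]
      calc ∫⁻ t in Icc (0 : ℝ) 1, ∫⁻ y in ball (0 : En n) 1,
            ENNReal.ofReal (gradKernel n (x + t • v) y) ∂(nuMeasure n)
          ≤ ∫⁻ _ in Icc (0 : ℝ) 1, C :=
            setLIntegral_mono' measurableSet_Icc fun t ht => hCb _ (segment_mem_ball hx hx' ht)
        _ = C := by simp
  rw [add_sub_cancel_left, ← toReal_enorm]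
  refine (ENNReal.toReal_mono (ENNReal.mul_ne_top ENNReal.ofReal_ne_top hC) hmain).trans_eq ?_
  rw [ENNReal.toReal_mul, ENNReal.toReal_ofReal (by positivity)]
  ring
end
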